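/- arXiv:1402.1818 — 2 statements merged into one kernel-verified Lean document; each statement's English description precedes it below -/
import Mathlib

section
/- For each subset R of ℚ ∩ (0,1), there exists a standard Borel space X with a nonatomic σ-finite Borel measure μ satisfying μ(X) = ∞, and an invertible measure-preserving transformation T : X → X, such that for all natural numbers p, q with 0 < p < q, the product transformation T^p × T^q on (X × X, μ × μ) is conservative if and only if the rational number p/q belongs to R. -/
/-!
The space is the compact group `X = ∏ j, ZMod (w j)`, where `w i ∣ w (i + 1)`, and the
transformation is `T x = x + 1`. Choose pairs `(u i, v i)` with `0 < u i < v i` such that every pair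
with ratio in `R` occurs infinitely often and every ratio outside `R` only finitely often. At place
`i` four digits are allowed: `0`, `u i`, `L i` and `L i + v i`, with `L i` much larger than `v i`.
If the weights `w i` grow fast enough, no carries occur, and the sums `∑ i, digit i * w i` form a
Cantor set in `X`. The law of such a sum with independent uniform digits splits, according to the
lowest digits, into equal multiples of translates of the law of the tail. Replacing these finitely
many translates by longer and longer windows of consecutive integer translates gives an increasing
sequence of measures, whose limit is `T`-invariant, nonatomic and infinite; it is σ-finite because
the Cantor set has measure at most `1`.

* If `p / q ∉ R`, let `A` be the set of sums over the places `≥ M`, with `M` large. Were `A × A` to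
  meet its preimage under `(T ^ p × T ^ q) ^ n` with `n > 0`, the lowest place at which a digit
  moves would exhibit two digit differences in ratio `p / q`. But the ratios below `1` at place `i`
  are `u i / v i` and numbers tending to `0` or to `1`, so no digit moves and `n = 0`.
* If `p / q ∈ R`, then there are infinitely many `i` with `(u i, v i) = (p, q)`, and after time
  `w i` the digits `0` and `L i` at place `i` of the two coordinates become `p` and `L i + q`.
  Because translations of the compact group of digit sequences act continuously in measure, for
  large `i` this move takes place within any given set of positive measure, which therefore recurs.
-/

open MeasureTheory

/-- `T` is *conservative* w.r.t. `μ`: for every measurable set `A` of positive measure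
there is a positive integer `n` with `μ (T⁻ⁿ A ∩ A) > 0`. -/
def IsConservativeMap {X : Type*} [MeasurableSpace X] (μ : Measure X) (T : X → X) : Prop :=
  ∀ A : Set X, MeasurableSet A → 0 < μ A →
    ∃ n : ℕ, 0 < n ∧ 0 < μ (T^[n] ⁻¹' A ∩ A)

open Filter Finset Topology
open scoped ENNReal

section Measures

lemma prod_iterate_add_one {G : Type*} [AddMonoidWithOne G] (p q : ℕ) :
    (fun z : G × G => ((· + 1)^[p] z.1, (· + 1)^[q] z.2)) = (· + ((p : G), (q : G))) := by
  simp only [add_right_iterate, nsmul_one, Prod.add_def]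

lemma iSup_measure_apply_of_monotone {X ι : Type*} [MeasurableSpace X] [Preorder ι]
    [IsDirectedOrder ι] {m : ι → Measure X} (hm : Monotone m) {s : Set X}
    (hs : MeasurableSet s) : (⨆ i, m i) s = ⨆ i, m i s := by
  let ν : Measure X := Measure.ofMeasurable (fun s _ => ⨆ i, m i s) (by simp) (by
    intro f hf hd
    simp_rw [measure_iUnion hd hf, ENNReal.tsum_eq_iSup_sum]
    rw [iSup_comm]
    exact iSup_congr fun t => (ENNReal.finsetSum_iSup_of_monotone fun n _ _ h => hm h (f n)).symm)
  have hν : ∀ {t}, MeasurableSet t → ν t = ⨆ i, m i t := Measure.ofMeasurable_apply _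
  refine le_antisymm ?_ (iSup_le fun i => le_iSup m i s)
  rw [← hν hs]
  refine iSup_le (f := m) (fun i => Measure.le_iff.2 fun t ht => ?_) s
  rw [hν ht]
  exact le_iSup (fun i => m i t) i

lemma measurePreserving_iSup {X ι : Type*} [MeasurableSpace X] (e : X ≃ᵐ X) {m : ι → Measure X}
    (he : ∀ i, (m i).map e ≤ ⨆ j, m j) (he' : ∀ i, (m i).map e.symm ≤ ⨆ j, m j) :
    MeasurePreserving e (⨆ i, m i) (⨆ i, m i) := by
  have le_map : ∀ f : X ≃ᵐ X, (∀ i, (m i).map f.symm ≤ ⨆ j, m j) →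
      ⨆ i, m i ≤ (⨆ i, m i).map f := fun f hf => iSup_le fun i =>
    calc m i = ((m i).map f.symm).map f := f.map_map_symm.symm
      _ ≤ (⨆ i, m i).map f := Measure.map_mono (hf i) f.measurable
  refine ⟨e.measurable, le_antisymm ?_ (le_map e he')⟩
  calc (⨆ i, m i).map e ≤ ((⨆ i, m i).map e.symm).map e :=
        Measure.map_mono (le_map e.symm he) e.measurable
    _ = ⨆ i, m i := e.map_map_symm

lemma measurePreserving_add_zsmul {G : Type*} [AddGroup G] [MeasurableSpace G] [MeasurableAdd G]
    {μ : Measure G} {a : G} (h : MeasurePreserving (· + a) μ μ) (n : ℤ) :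
    MeasurePreserving (· + n • a) μ μ := by
  have hnat (n : ℕ) : MeasurePreserving (· + n • a) μ μ := by
    simpa only [add_right_iterate] using h.iterate n
  cases n with
  | ofNat n => simpa using hnat n
  | negSucc n =>
    simpa using MeasurePreserving.symm (MeasurableEquiv.addRight ((n + 1) • a)) (hnat (n + 1))

/-- Translations act continuously in measure, so the finitely many translates of `B` by elements
close to `0` almost coincide with `B`. -/
lemma eventually_measure_iInter_preimage_add_pos {G ι κ : Type*} [AddGroup G] [TopologicalSpace G]
    [IsTopologicalAddGroup G] [MeasurableSpace G] [BorelSpace G] {μ : Measure G}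
    [μ.IsAddLeftInvariant] [μ.InnerRegularCompactLTTop] [IsLocallyFiniteMeasure μ] [Finite κ]
    {l : Filter ι} {g : κ → ι → G} (hg : ∀ k, Tendsto (g k) l (𝓝 0)) {B : Set G}
    (hB : MeasurableSet B) (h0 : μ B ≠ 0) (htop : μ B ≠ ⊤) :
    ∀ᶠ i in l, 0 < μ (⋂ k, (g k i + ·) ⁻¹' B) := by
  cases nonempty_fintype κ
  let F : C(G, C(G, G)) := ContinuousMap.curry ⟨fun z => z.1 + z.2, continuous_add⟩
  have hF (x : G) : MeasurePreserving (F x) μ μ := measurePreserving_add_left μ x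
  have hF0 : F 0 ⁻¹' B = B := by ext x; simp [F]
  have hdiff (k : κ) : Tendsto (fun i => μ (B \ F (g k i) ⁻¹' B)) l (𝓝 0) := by
    have := tendsto_measure_symmDiff_preimage_nhds_zero ((F.continuous.tendsto 0).comp (hg k))
      (.of_forall fun i => hF (g k i)) (hF 0) hB.nullMeasurableSet htop
    rw [hF0] at this
    exact tendsto_of_tendsto_of_tendsto_of_le_of_le tendsto_const_nhds this (fun _ => zero_le)
      fun i => measure_mono Set.subset_union_right
  have hsum : Tendsto (fun i => ∑ k, μ (B \ F (g k i) ⁻¹' B)) l (𝓝 0) := by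
    simpa using tendsto_finsetSum univ fun k _ => hdiff k
  filter_upwards [hsum.eventually_lt_const (pos_iff_ne_zero.2 h0)] with i hi
  refine pos_iff_ne_zero.2 fun hnull => hi.not_ge ?_
  have hcover : B ⊆ (⋂ k, F (g k i) ⁻¹' B) ∪ ⋃ k, B \ F (g k i) ⁻¹' B := by
    rw [← Set.sdiff_iInter]
    exact Set.subset_union_right.trans Set.union_sdiff_self.ge
  calc μ B ≤ μ (⋂ k, F (g k i) ⁻¹' B) + μ (⋃ k, B \ F (g k i) ⁻¹' B) :=
        (measure_mono hcover).trans (measure_union_le _ _)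
    _ = μ (⋃ k, B \ F (g k i) ⁻¹' B) := by
        rw [show μ (⋂ k, F (g k i) ⁻¹' B) = 0 from hnull, zero_add]
    _ ≤ ∑ k, μ (B \ F (g k i) ⁻¹' B) := measure_iUnion_fintype_le _ _

end Measures

lemma update_eq_single_add {ι : Type*} [DecidableEq ι] {G : ι → Type*} [∀ i, AddGroup (G i)]
    (ω : ∀ i, G i) (i : ι) (a : G i) :
    Function.update ω i a = Pi.single i (a - ω i) + ω := by
  ext j
  rcases eq_or_ne j i with rfl | h <;> simp [*]

section UniformSeq

variable (k : ℕ) [NeZero k]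

/-- The law of a sequence of independent uniform digits in `Fin k`, obtained as the normalized
Haar measure of the compact group `ℕ → Fin k`. -/
noncomputable def uniformSeq : Measure (ℕ → Fin k) := Measure.addHaarMeasure ⊤

instance : (uniformSeq k).IsAddHaarMeasure := by unfold uniformSeq; infer_instance

instance : IsProbabilityMeasure (uniformSeq k) :=
  ⟨Measure.addHaarMeasure_self (K₀ := ⊤)⟩

variable {k}

lemma tendsto_pi_single (a : Fin k) :
    Tendsto (fun i : ℕ => (Pi.single i a : ℕ → Fin k)) atTop (𝓝 0) := by
  refine tendsto_pi_nhds.2 fun j => tendsto_const_nhds.congr' ?_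
  filter_upwards [eventually_gt_atTop j] with i hi
  simp [Pi.single_eq_of_ne hi.ne]

instance [Nontrivial (Fin k)] : NullSingletonClass (uniformSeq k) := by
  obtain ⟨a, ha⟩ := exists_ne (0 : Fin k)
  have h : Tendsto (fun i : ℕ => (Pi.single i a : ℕ → Fin k)) atTop (𝓝[≠] 0) :=
    tendsto_nhdsWithin_iff.2 ⟨tendsto_pi_single a, .of_forall fun i => by simpa using ha⟩
  have : (𝓝[≠] (0 : ℕ → Fin k)).NeBot := h.neBot
  infer_instance

lemma card_smul_eq_sum_map_update (i : ℕ) :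
    (k : ℝ≥0∞) • uniformSeq k =
      ∑ a, (uniformSeq k).map (fun ω => Function.update ω i a) := by
  ext B hB
  have hind : Measurable (B.indicator (1 : (ℕ → Fin k) → ℝ≥0∞)) := measurable_one.indicator hB
  symm
  calc (∑ a, (uniformSeq k).map (fun ω => Function.update ω i a)) B
      = ∑ a, ∫⁻ ω, B.indicator 1 (Function.update ω i a) ∂uniformSeq k := by
        simp only [Measure.finsetSum_apply]
        refine sum_congr rfl fun a _ => ?_
        rw [← lintegral_map hind (by fun_prop), lintegral_indicator_one hB]
    _ = ∫⁻ ω, ∑ a, B.indicator 1 (Function.update ω i a) ∂uniformSeq k :=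
        (lintegral_finsetSum _ fun a _ => hind.comp (by fun_prop)).symm
    _ = ∫⁻ ω, ∑ x, B.indicator 1 (Pi.single i x + ω) ∂uniformSeq k := by
        simp only [update_eq_single_add]
        exact lintegral_congr fun ω => Equiv.sum_comp (Equiv.subRight (ω i))
          fun x => B.indicator 1 (Pi.single i x + ω)
    _ = ∑ x : Fin k, ∫⁻ ω, B.indicator 1 (Pi.single i x + ω) ∂uniformSeq k :=
        lintegral_finsetSum _ fun a _ => hind.comp (measurable_const_add _)
    _ = ((k : ℝ≥0∞) • uniformSeq k) B := by
        simp [lintegral_add_left_eq_self (μ := uniformSeq k) (B.indicator 1),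
          lintegral_indicator_one hB]

lemma quasiMeasurePreserving_update (i : ℕ) (a : Fin k) :
    Measure.QuasiMeasurePreserving (fun ω => Function.update ω i a)
      (uniformSeq k) (uniformSeq k) := by
  refine ⟨by fun_prop, Measure.absolutelyContinuous_of_le_smul (c := (k : ℝ≥0∞)) ?_⟩
  rw [card_smul_eq_sum_map_update i]
  exact single_le_sum (f := fun a => (uniformSeq k).map (fun ω => Function.update ω i a))
    (fun _ _ => Measure.zero_le _) (mem_univ a)

lemma eventually_measure_forall_update_mem_pos {B : Set ((ℕ → Fin k) × (ℕ → Fin k))}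
    (hB : MeasurableSet B) (h0 : ((uniformSeq k).prod (uniformSeq k)) B ≠ 0) :
    ∀ᶠ i in atTop, 0 < ((uniformSeq k).prod (uniformSeq k))
      {z | ∀ a b, (Function.update z.1 i a, Function.update z.2 i b) ∈ B} := by
  have hlim (x : Fin k × Fin k) :
      Tendsto (fun i : ℕ => ((Pi.single i x.1, Pi.single i x.2) : (ℕ → Fin k) × (ℕ → Fin k)))
        atTop (𝓝 0) := (tendsto_pi_single x.1).prodMk_nhds (tendsto_pi_single x.2)
  filter_upwards [eventually_measure_iInter_preimage_add_pos hlim hB h0 (measure_ne_top _ _)]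
    with i hi
  refine hi.trans_le (measure_mono fun z hz a b => ?_)
  rw [update_eq_single_add, update_eq_single_add]
  exact Set.mem_iInter.1 hz (a - z.1 i, b - z.2 i)

end UniformSeq

namespace DigitExpansion

variable {k : ℕ} (d : ℕ → Fin k → ℕ)

section Weights

/-- Half the length of the window of integer translates used at stage `N` of the construction of
the measure; the factors are large enough for the windows to absorb all carries. -/
def radius (N : ℕ) : ℕ := ∏ i ∈ range N, (4 * (i + 1) * (∑ a, d i a) + 2)

/-- The weight of place `N` in the mixed radix expansions, twice the length of a window. -/
def weight (N : ℕ) : ℕ := 4 * radius d N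

lemma radius_pos (N : ℕ) : 0 < radius d N := prod_pos fun _ _ => by positivity

lemma weight_pos (N : ℕ) : 0 < weight d N := Nat.mul_pos four_pos (radius_pos d N)

lemma weight_dvd_weight {i j : ℕ} (h : i ≤ j) : weight d i ∣ weight d j :=
  mul_dvd_mul_left 4 (prod_dvd_prod_of_subset _ _ _ (range_subset_range.2 h))

lemma two_mul_radius_add_le (i : ℕ) (a : Fin k) :
    2 * radius d i + (i + 1) * (d i a * weight d i) ≤ radius d (i + 1) := by
  have ha : d i a ≤ ∑ a, d i a := single_le_sum (fun _ _ => Nat.zero_le _) (mem_univ a)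
  calc 2 * radius d i + (i + 1) * (d i a * weight d i)
      = radius d i * (4 * (i + 1) * d i a + 2) := by unfold weight; ring
    _ ≤ radius d i * (4 * (i + 1) * (∑ a, d i a) + 2) := by gcongr
    _ = radius d (i + 1) := (prod_range_succ _ i).symm

lemma two_pow_le_radius (N : ℕ) : 2 ^ N ≤ radius d N :=
  calc 2 ^ N = ∏ _i ∈ range N, 2 := by simp
    _ ≤ radius d N := prod_le_prod' fun i _ => Nat.le_add_left 2 _

lemma lt_weight (N : ℕ) : N < weight d N := by
  have := N.lt_two_pow_self.trans_le (two_pow_le_radius d N)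
  unfold weight
  omega

variable {d}

lemma pow_le_radius (hd : ∀ i, Function.Injective (d i)) (N : ℕ) :
    (2 * k) ^ N ≤ radius d N := by
  have hsum (i : ℕ) : k ≤ ∑ a, d i a + 1 := by
    have h0 : #{a | d i a = 0} ≤ 1 := card_le_one.2 fun a ha b hb =>
      hd i ((mem_filter.1 ha).2.trans (mem_filter.1 hb).2.symm)
    have h1 : #{a | ¬ d i a = 0} ≤ ∑ a, d i a := by
      rw [card_filter]
      exact sum_le_sum fun a _ => by split_ifs <;> omega
    have := card_filter_add_card_filter_not (s := (univ : Finset (Fin k))) (d i · = 0)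
    simp only [card_univ, Fintype.card_fin] at this
    omega
  calc (2 * k) ^ N = ∏ _i ∈ range N, 2 * k := by simp
    _ ≤ radius d N := prod_le_prod' fun i _ => by
        have h := hsum i
        generalize ∑ a, d i a = s at h ⊢
        nlinarith [Nat.zero_le (i * s)]

lemma abs_mul_digit_sub_lt {i r : ℕ} (hr : r ≤ i + 1) (a b : Fin k) :
    |(r : ℤ) * (d i a - d i b) * weight d i| < radius d (i + 1) := by
  have hpos : (0 : ℤ) < radius d i := mod_cast radius_pos d i
  have key (a b : Fin k) : (r : ℤ) * (d i a - d i b) * weight d i < radius d (i + 1) := by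
    have h : (2 * radius d i + (i + 1) * (d i a * weight d i) : ℤ) ≤ radius d (i + 1) :=
      mod_cast two_mul_radius_add_le d i a
    have hr' : (r * (d i a * weight d i) : ℤ) ≤ (i + 1) * (d i a * weight d i) := by
      gcongr; exact_mod_cast hr
    have hb : (0 : ℤ) ≤ r * (d i b * weight d i) := by positivity
    linarith
  exact abs_lt.2 ⟨by linarith [key b a], key a b⟩

lemma natCast_mul_digit_sub_eq {i p q : ℕ} (hp : p ≤ i + 1) (hq : q ≤ i + 1)
    {a a' b b' : Fin k} (h : (weight d (i + 1) : ℤ) ∣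
      (p * (d i b' - d i b) - q * (d i a' - d i a)) * weight d i) :
    (p : ℤ) * (d i b' - d i b) = q * (d i a' - d i a) := by
  have hb := abs_mul_digit_sub_lt (d := d) hp b' b
  have ha := abs_mul_digit_sub_lt (d := d) hq a' a
  have hw : (weight d (i + 1) : ℤ) = 4 * radius d (i + 1) := by simp [weight]
  have h0 := Int.eq_zero_of_abs_lt_dvd h (by
    rw [sub_mul, hw]
    linarith [abs_sub (p * (d i b' - d i b) * weight d i : ℤ) (q * (d i a' - d i a) * weight d i)])
  exact sub_eq_zero.1 ((mul_eq_zero.1 h0).resolve_right (mod_cast (weight_pos d i).ne'))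

lemma injOn_window_add (hd : ∀ i, Function.Injective (d i)) (N : ℕ) (s : ℤ) :
    Set.InjOn (fun z : ℤ × Fin k => z.1 + s + d N z.2 * weight d N)
      (Icc (-(radius d N : ℤ)) (radius d N) ×ˢ (univ : Finset (Fin k))) := by
  rintro ⟨n, a⟩ hn ⟨m, b⟩ hm h
  simp only [coe_Icc, coe_univ, Set.mem_prod, Set.mem_Icc, Set.mem_univ, and_true] at hn hm h
  have hpos : (0 : ℤ) < radius d N := mod_cast radius_pos d N
  have hw : (weight d N : ℤ) = 4 * radius d N := by simp [weight]
  have hnm : n - m = (d N b - d N a) * weight d N := by linarith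
  have h0 : n - m = 0 := Int.eq_zero_of_abs_lt_dvd ⟨_, hnm.trans (mul_comm _ _)⟩
    (abs_lt.2 ⟨by linarith, by linarith⟩)
  have hab : (d N b : ℤ) - d N a = 0 :=
    (mul_eq_zero.1 (hnm.symm.trans h0)).resolve_right (by linarith)
  exact Prod.ext (by linarith) (hd N (mod_cast (sub_eq_zero.1 hab).symm))

lemma sum_digit_mul_weight_le (N : ℕ) (a : ℕ → Fin k) :
    ∑ i ∈ range N, d i (a i) * weight d i ≤ radius d N := by
  induction N with
  | zero => simp
  | succ N ih =>
    rw [sum_range_succ]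
    linarith [two_mul_radius_add_le d N (a N), Nat.zero_le (N * (d N (a N) * weight d N))]

end Weights

instance (n : ℕ) : Countable (ZMod n) := by
  cases n
  · exact inferInstanceAs (Countable ℤ)
  · exact inferInstanceAs (Countable (Fin _))

section Expansion

/-- The compact group of families of residues modulo the weights, on which the transformation will
be `x ↦ x + 1`. -/
abbrev PhaseSpace : Type := ∀ j, ZMod (weight d j)

/-- The sum of the digits `d i (ω i)` with their weights, over the places `i ≥ N`. It converges
since in the component `j` only the places below `j` matter. -/
def expansion (N : ℕ) (ω : ℕ → Fin k) : PhaseSpace d :=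
  fun j => ∑ i ∈ Ico N j, ((d i (ω i) * weight d i : ℕ) : ZMod (weight d j))

@[fun_prop]
lemma continuous_expansion (N : ℕ) : Continuous (expansion d N) :=
  continuous_pi fun j => continuous_finsetSum _ fun i _ =>
    (continuous_of_discreteTopology (f := fun a : Fin k =>
      ((d i a * weight d i : ℕ) : ZMod (weight d j)))).comp (continuous_apply i)

lemma measurable_expansion_add (N : ℕ) (x : PhaseSpace d) :
    Measurable fun ω => expansion d N ω + x :=
  (continuous_expansion d N).measurable.add_const x

variable {d}

lemma natCast_mul_weight_apply_eq_zero (n : ℕ) {i j : ℕ} (h : j ≤ i) :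
    ((n * weight d i : ℕ) : ZMod (weight d j)) = 0 :=
  (ZMod.natCast_eq_zero_iff _ _).2 ((weight_dvd_weight d h).mul_left n)

lemma intCast_eq_zero_iff {n : ℤ} : (n : PhaseSpace d) = 0 ↔ n = 0 := by
  refine ⟨fun h => ?_, by rintro rfl; simp⟩
  have hdvd : (weight d n.natAbs : ℤ) ∣ n :=
    (ZMod.intCast_zmod_eq_zero_iff_dvd _ _).1 (congrFun h n.natAbs)
  exact Int.eq_zero_of_abs_lt_dvd hdvd (by
    rw [Int.abs_eq_natAbs]; exact_mod_cast lt_weight d n.natAbs)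

lemma expansion_eq_add_succ (N : ℕ) (ω : ℕ → Fin k) :
    expansion d N ω = ((d N (ω N) * weight d N : ℕ) : PhaseSpace d) + expansion d (N + 1) ω := by
  ext j
  simp only [expansion, Pi.add_apply, Pi.natCast_apply]
  rcases lt_or_ge N j with h | h
  · exact sum_eq_sum_Ico_succ_bot h _
  · rw [natCast_mul_weight_apply_eq_zero _ h, Ico_eq_empty_of_le h,
      Ico_eq_empty_of_le (h.trans N.le_succ), sum_empty, add_zero]

lemma expansion_congr {N : ℕ} {ω ω' : ℕ → Fin k} (h : ∀ i, N ≤ i → ω i = ω' i) :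
    expansion d N ω = expansion d N ω' :=
  funext fun j => sum_congr rfl fun i hi => by rw [h i (mem_Ico.1 hi).1]

lemma expansion_eq_sum_add {M N : ℕ} (h : M ≤ N) (ω : ℕ → Fin k) :
    expansion d M ω =
      ((∑ i ∈ Ico M N, d i (ω i) * weight d i : ℕ) : PhaseSpace d) + expansion d N ω := by
  induction N, h using Nat.le_induction with
  | base => simp
  | succ N h ih => rw [ih, expansion_eq_add_succ N, sum_Ico_succ_top h, Nat.cast_add, add_assoc]

lemma expansion_update (ω : ℕ → Fin k) {i p : ℕ} {a b : Fin k} (hp : d i b = d i a + p) :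
    expansion d 0 (Function.update ω i b) =
      expansion d 0 (Function.update ω i a) + weight d i • (p : PhaseSpace d) := by
  have hlow : ∀ j ∈ Ico 0 i, d j (Function.update ω i b j) * weight d j =
      d j (Function.update ω i a j) * weight d j := fun j hj => by
    rw [Function.update_of_ne (mem_Ico.1 hj).2.ne, Function.update_of_ne (mem_Ico.1 hj).2.ne]
  have hhigh : expansion d (i + 1) (Function.update ω i b) =
      expansion d (i + 1) (Function.update ω i a) := expansion_congr fun j hj => by
    have hji : j ≠ i := (Nat.lt_of_succ_le hj).ne'
    rw [Function.update_of_ne hji, Function.update_of_ne hji]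
  rw [expansion_eq_sum_add i.zero_le, expansion_eq_sum_add i.zero_le (Function.update ω i a),
    sum_congr rfl hlow, expansion_eq_add_succ i, expansion_eq_add_succ i (Function.update ω i a),
    hhigh, Function.update_self, Function.update_self, hp, nsmul_eq_mul]
  push_cast
  ring

lemma weight_dvd_of_expansion_eq_add {M i : ℕ} (hi : M ≤ i) {ω ω' : ℕ → Fin k} {n : ℤ}
    (h : expansion d M ω' = expansion d M ω + n) (hω : ∀ j, M ≤ j → j < i → ω' j = ω j) :
    (weight d (i + 1) : ℤ) ∣ n - (d i (ω' i) - d i (ω i)) * weight d i := by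
  rw [← ZMod.intCast_zmod_eq_zero_iff_dvd]
  have hcomp := congrFun h (i + 1)
  simp only [expansion, Pi.add_apply, Pi.intCast_apply, sum_Ico_succ_top hi] at hcomp
  rw [sum_congr rfl fun j hj => by rw [hω j (mem_Ico.1 hj).1 (mem_Ico.1 hj).2]] at hcomp
  push_cast at hcomp ⊢
  linear_combination -hcomp

lemma expansion_injective (hd : ∀ i, Function.Injective (d i)) :
    Function.Injective (expansion d 0) := by
  intro ω' ω h
  ext1 i
  induction i using Nat.strong_induction_on with
  | _ i ih =>
    have hdvd := weight_dvd_of_expansion_eq_add (n := 0) i.zero_le (by simpa using h)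
      fun j _ => ih j
    have heq := natCast_mul_digit_sub_eq (d := d) (p := 1) (q := 0) (a := ω i) (a' := ω i)
      (b := ω' i) (b' := ω i) (by omega) (by omega) (by convert hdvd using 1; push_cast; ring)
    exact hd i (by push_cast at heq; omega)

end Expansion

section Law

variable [NeZero k]

/-- The law of `n` plus the expansion, over the places `i ≥ N`, of a uniformly random sequence,
scaled to total mass `k⁻¹ ^ N`: it is one of the `k ^ N` pieces into which the law of the full
expansion splits according to the first `N` digits. -/
noncomputable def law (N : ℕ) (n : ℤ) : Measure (PhaseSpace d) :=
  (k : ℝ≥0∞)⁻¹ ^ N • (uniformSeq k).map fun ω => expansion d N ω + (n : PhaseSpace d)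

lemma law_apply (N : ℕ) (n : ℤ) {B : Set (PhaseSpace d)} (hB : MeasurableSet B) :
    law d N n B =
      (k : ℝ≥0∞)⁻¹ ^ N * uniformSeq k {ω | expansion d N ω + (n : PhaseSpace d) ∈ B} := by
  rw [law, Measure.smul_apply, Measure.map_apply (measurable_expansion_add d N _) hB, smul_eq_mul,
    Set.preimage]

lemma law_univ (N : ℕ) (n : ℤ) : law d N n Set.univ = (k : ℝ≥0∞)⁻¹ ^ N := by
  simp [law_apply]

instance (N : ℕ) (n : ℤ) : IsFiniteMeasure (law d N n) :=
  ⟨by simp [law_univ, Nat.pos_of_neZero]⟩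

lemma map_add_law (N : ℕ) (n s : ℤ) :
    (law d N n).map (· + (s : PhaseSpace d)) = law d N (n + s) := by
  rw [law, Measure.map_smul,
    Measure.map_map (measurable_add_const _) (measurable_expansion_add d N _), law]
  simp [Function.comp_def, add_assoc]

lemma law_eq_sum (N : ℕ) (n : ℤ) :
    law d N n = ∑ a, law d (N + 1) (n + d N a * weight d N) := by
  have hk : (k : ℝ≥0∞) ≠ 0 := NeZero.ne _
  have hupdate (a : Fin k) : (fun ω => expansion d N ω + (n : PhaseSpace d)) ∘
      (fun ω => Function.update ω N a) =
      fun ω => expansion d (N + 1) ω + ((n + d N a * weight d N : ℤ) : PhaseSpace d) := by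
    ext1 ω
    have htail : expansion d (N + 1) (Function.update ω N a) = expansion d (N + 1) ω :=
      expansion_congr fun j hj => Function.update_of_ne (Nat.lt_of_succ_le hj).ne' _ _
    simp only [Function.comp_apply]
    rw [expansion_eq_add_succ, htail, Function.update_self]
    push_cast
    ring
  symm
  calc ∑ a, law d (N + 1) (n + d N a * weight d N)
      = (k : ℝ≥0∞)⁻¹ ^ (N + 1) • (∑ a, (uniformSeq k).map fun ω => Function.update ω N a).map
          fun ω => expansion d N ω + (n : PhaseSpace d) := by
        rw [Measure.map_finset_sum (measurable_expansion_add d N n).aemeasurable, smul_sum]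
        refine sum_congr rfl fun a _ => ?_
        rw [Measure.map_map (measurable_expansion_add d N n) (by fun_prop), hupdate, law]
    _ = law d N n := by
        rw [← card_smul_eq_sum_map_update, Measure.map_smul, smul_smul, pow_succ, mul_assoc,
          ENNReal.inv_mul_cancel hk (ENNReal.natCast_ne_top k), mul_one, law]

lemma law_succ_le (N : ℕ) (n : ℤ) (a : Fin k) :
    law d (N + 1) n ≤ law d N (n - d N a * weight d N) := by
  rw [law_eq_sum d N]
  simpa using single_le_sum
    (f := fun b => law d (N + 1) (n - d N a * weight d N + d N b * weight d N))
    (fun _ _ => Measure.zero_le _) (mem_univ a)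

lemma exists_law_le_law_zero (N : ℕ) (n : ℤ) : ∃ m, law d N n ≤ law d 0 m := by
  induction N generalizing n with
  | zero => exact ⟨n, le_rfl⟩
  | succ N ih =>
    obtain ⟨m, hm⟩ := ih (n - d N 0 * weight d N)
    exact ⟨m, (law_succ_le d N n 0).trans hm⟩

end Law

section InvariantMeasure

variable [NeZero k]

/-- The part at stage `N` of the invariant measure: the sum of the pieces `law d N n` over the
window `|n| ≤ radius d N`. -/
noncomputable def windowMeasure (N : ℕ) : Measure (PhaseSpace d) :=
  ∑ n ∈ Icc (-(radius d N : ℤ)) (radius d N), law d N n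

/-- The translation invariant measure on the phase space, obtained from the law of the random
expansion by letting the windows of its pieces grow. -/
noncomputable def invariantMeasure : Measure (PhaseSpace d) := ⨆ N, windowMeasure d N

variable {d}

lemma map_add_windowMeasure_le (hd : ∀ i, Function.Injective (d i)) (N : ℕ) {s : ℤ}
    (hs : |s| ≤ 1) :
    (windowMeasure d N).map (· + (s : PhaseSpace d)) ≤ windowMeasure d (N + 1) := by
  have hwindow : ∀ z ∈ Icc (-(radius d N : ℤ)) (radius d N) ×ˢ (univ : Finset (Fin k)),
      z.1 + s + d N z.2 * weight d N ∈ Icc (-(radius d (N + 1) : ℤ)) (radius d (N + 1)) := by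
    rintro ⟨n, a⟩ hn
    simp only [mem_product, mem_Icc, mem_univ, and_true] at hn ⊢
    have hnext : (2 * radius d N + (N + 1) * (d N a * weight d N) : ℤ) ≤ radius d (N + 1) :=
      mod_cast two_mul_radius_add_le d N a
    have hpos : (0 : ℤ) < radius d N := mod_cast radius_pos d N
    have hdigit : (0 : ℤ) ≤ d N a * weight d N := by positivity
    have : (0 : ℤ) ≤ N * (d N a * weight d N) := by positivity
    obtain ⟨hs₁, hs₂⟩ := abs_le.1 hs
    constructor <;> linarith
  calc (windowMeasure d N).map (· + (s : PhaseSpace d))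
      = ∑ z ∈ Icc (-(radius d N : ℤ)) (radius d N) ×ˢ (univ : Finset (Fin k)),
          law d (N + 1) (z.1 + s + d N z.2 * weight d N) := by
        rw [windowMeasure, Measure.map_finset_sum (by fun_prop), sum_product]
        exact sum_congr rfl fun n _ => by rw [map_add_law, law_eq_sum]
    _ = ∑ n ∈ (Icc (-(radius d N : ℤ)) (radius d N) ×ˢ (univ : Finset (Fin k))).image
          (fun z => z.1 + s + d N z.2 * weight d N), law d (N + 1) n :=
        (sum_image (by simpa using injOn_window_add hd N s)).symm
    _ ≤ windowMeasure d (N + 1) :=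
        sum_le_sum_of_subset_of_nonneg (image_subset_iff.2 hwindow) fun _ _ _ => Measure.zero_le _

lemma monotone_windowMeasure (hd : ∀ i, Function.Injective (d i)) :
    Monotone (windowMeasure d) :=
  monotone_nat_of_le_succ fun N => by
    simpa using map_add_windowMeasure_le hd N (s := 0) (by simp)

lemma measurePreserving_add_one (hd : ∀ i, Function.Injective (d i)) :
    MeasurePreserving (· + 1) (invariantMeasure d) (invariantMeasure d) := by
  have hle {s : ℤ} (hs : |s| ≤ 1) (N : ℕ) :
      (windowMeasure d N).map (· + (s : PhaseSpace d)) ≤ ⨆ N, windowMeasure d N :=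
    (map_add_windowMeasure_le hd N hs).trans (le_iSup _ (N + 1))
  exact measurePreserving_iSup (MeasurableEquiv.addRight 1)
    (by simpa using hle (s := 1) (by simp)) (by simpa using hle (s := -1) (by simp))

lemma measurePreserving_add_intCast (hd : ∀ i, Function.Injective (d i)) (n : ℤ) :
    MeasurePreserving (· + (n : PhaseSpace d)) (invariantMeasure d) (invariantMeasure d) := by
  simpa using measurePreserving_add_zsmul (measurePreserving_add_one hd) n

lemma law_le_invariantMeasure (hd : ∀ i, Function.Injective (d i)) (N : ℕ) (n : ℤ) :
    law d N n ≤ invariantMeasure d := by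
  have h0 : law d N 0 ≤ windowMeasure d N :=
    single_le_sum (f := law d N) (fun _ _ => Measure.zero_le _) (by simp)
  calc law d N n = (law d N 0).map (· + (n : PhaseSpace d)) := by rw [map_add_law, zero_add]
    _ ≤ (invariantMeasure d).map (· + (n : PhaseSpace d)) :=
        Measure.map_mono (h0.trans (le_iSup _ N)) (by fun_prop)
    _ = invariantMeasure d := (measurePreserving_add_intCast hd n).map_eq

lemma invariantMeasure_absolutelyContinuous (hd : ∀ i, Function.Injective (d i)) :
    invariantMeasure d ≪ Measure.sum fun n : ℤ => law d 0 n := by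
  refine Measure.AbsolutelyContinuous.mk fun B hB hnull => ?_
  rw [invariantMeasure, iSup_measure_apply_of_monotone (monotone_windowMeasure hd) hB,
    ENNReal.iSup_eq_zero]
  refine fun N => (Measure.finsetSum_apply _ _ _).trans (sum_eq_zero fun n _ => ?_)
  obtain ⟨m, hm⟩ := exists_law_le_law_zero d N n
  exact le_zero_iff.1 ((hm B).trans ((Measure.le_sum _ m B).trans hnull.le))

lemma invariantMeasure_univ (hd : ∀ i, Function.Injective (d i)) :
    invariantMeasure d Set.univ = ⊤ := by
  have hk : (k : ℝ≥0∞) ≠ 0 := NeZero.ne _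
  have hN (N : ℕ) : (N : ℝ≥0∞) ≤ invariantMeasure d Set.univ := by
    have hcard : (2 * k) ^ N ≤ #(Icc (-(radius d N : ℤ)) (radius d N)) := by
      have := pow_le_radius hd N
      rw [Int.card_Icc]; omega
    calc (N : ℝ≥0∞) ≤ 2 ^ N := mod_cast Nat.lt_two_pow_self.le
      _ = ((2 * k) ^ N : ℕ) * (k : ℝ≥0∞)⁻¹ ^ N := by
        push_cast
        rw [← mul_pow, mul_assoc, ENNReal.mul_inv_cancel hk (ENNReal.natCast_ne_top k), mul_one]
      _ ≤ #(Icc (-(radius d N : ℤ)) (radius d N)) * (k : ℝ≥0∞)⁻¹ ^ N := by gcongr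
      _ = windowMeasure d N Set.univ := by simp [windowMeasure, law_univ]
      _ ≤ invariantMeasure d Set.univ := le_iSup (windowMeasure d) N _
  exact ENNReal.eq_top_of_forall_nnreal_le fun r =>
    (ENNReal.coe_le_coe.2 (Nat.le_ceil r)).trans (by simpa using hN ⌈r⌉₊)

lemma invariantMeasure_eq_zero (hd : ∀ i, Function.Injective (d i)) {B : Set (PhaseSpace d)}
    (hB : MeasurableSet B)
    (h : ∀ n : ℤ, uniformSeq k {ω | expansion d 0 ω + (n : PhaseSpace d) ∈ B} = 0) :
    invariantMeasure d B = 0 := by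
  refine invariantMeasure_absolutelyContinuous hd ((Measure.sum_apply_eq_zero' hB).2 fun n => ?_)
  rw [law_apply d 0 n hB, h, mul_zero]

lemma nullSingletonClass_invariantMeasure [Nontrivial (Fin k)]
    (hd : ∀ i, Function.Injective (d i)) : NullSingletonClass (invariantMeasure d) where
  measure_singleton x := invariantMeasure_eq_zero hd (measurableSet_singleton x) fun _ =>
    Set.Subsingleton.measure_zero (fun _ hω _ hω' =>
      expansion_injective hd (add_right_cancel (hω.trans hω'.symm))) _

end InvariantMeasure

section SigmaFinite

lemma measurableSet_range_expansion (N : ℕ) : MeasurableSet (Set.range (expansion d N)) :=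
  (isCompact_range (continuous_expansion d N)).measurableSet

variable {d}

lemma eq_sum_of_expansion_add_eq {N : ℕ} {n : ℤ} (hn : |n| ≤ radius d N) {ω ω' : ℕ → Fin k}
    (h : expansion d 0 ω' = expansion d N ω + (n : PhaseSpace d)) :
    n = (∑ i ∈ range N, d i (ω' i) * weight d i : ℕ) := by
  set m := ∑ i ∈ range N, d i (ω' i) * weight d i with hm
  have hdvd : (weight d N : ℤ) ∣ n - m := by
    rw [← ZMod.intCast_eq_intCast_iff_dvd_sub]
    simpa [expansion, hm] using congrFun h N
  have hsum : (m : ℤ) ≤ radius d N := mod_cast sum_digit_mul_weight_le N ω'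
  have hpos : (0 : ℤ) < radius d N := mod_cast radius_pos d N
  have hw : (weight d N : ℤ) = 4 * radius d N := by simp [weight]
  obtain ⟨hn₁, hn₂⟩ := abs_le.1 hn
  exact sub_eq_zero.1 (Int.eq_zero_of_abs_lt_dvd hdvd (abs_lt.2 ⟨by linarith, by linarith⟩))

variable [NeZero k]

/-- At most `k ^ N` of the pieces of stage `N` in the window charge the set of expansions. -/
lemma windowMeasure_range_expansion_le (N : ℕ) :
    windowMeasure d N (Set.range (expansion d 0)) ≤ 1 := by
  let heads : Finset ℤ :=
    univ.image fun a : Fin N → Fin k => ((∑ i : Fin N, d i (a i) * weight d i : ℕ) : ℤ)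
  have hcard : #heads ≤ k ^ N := card_image_le.trans (by simp)
  have hzero : ∀ n ∈ Icc (-(radius d N : ℤ)) (radius d N), n ∉ heads →
      law d N n (Set.range (expansion d 0)) = 0 := by
    intro n hn hheads
    have hempty : {ω | expansion d N ω + (n : PhaseSpace d) ∈ Set.range (expansion d 0)} = ∅ := by
      refine Set.eq_empty_of_forall_notMem fun ω ⟨ω', h⟩ => hheads ?_
      rw [eq_sum_of_expansion_add_eq (abs_le.2 (mem_Icc.1 hn)) h]
      exact mem_image.2 ⟨fun i => ω' i, mem_univ _, by rw [← Fin.sum_univ_eq_sum_range]⟩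
    rw [law_apply d N n (measurableSet_range_expansion d 0), hempty, measure_empty, mul_zero]
  have hle (n : ℤ) : law d N n (Set.range (expansion d 0)) ≤ (k : ℝ≥0∞)⁻¹ ^ N :=
    (measure_mono (Set.subset_univ _)).trans (law_univ d N n).le
  calc windowMeasure d N (Set.range (expansion d 0))
      = ∑ n ∈ Icc (-(radius d N : ℤ)) (radius d N), law d N n (Set.range (expansion d 0)) :=
        Measure.finsetSum_apply _ _ _
    _ ≤ ∑ n ∈ heads, law d N n (Set.range (expansion d 0)) :=
        sum_le_sum_of_ne_zero fun n hn h => by_contra fun hheads => h (hzero n hn hheads)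
    _ ≤ (k ^ N : ℕ) * (k : ℝ≥0∞)⁻¹ ^ N :=
        (sum_le_card_nsmul _ _ _ fun n _ => hle n).trans (by rw [nsmul_eq_mul]; gcongr)
    _ = 1 := by
        rw [Nat.cast_pow, ← mul_pow,
          ENNReal.mul_inv_cancel (NeZero.ne _) (ENNReal.natCast_ne_top k), one_pow]

lemma invariantMeasure_range_expansion_le (hd : ∀ i, Function.Injective (d i)) :
    invariantMeasure d (Set.range (expansion d 0)) ≤ 1 := by
  rw [invariantMeasure, iSup_measure_apply_of_monotone (monotone_windowMeasure hd)
    (measurableSet_range_expansion d 0)]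
  exact iSup_le windowMeasure_range_expansion_le

lemma sigmaFinite_invariantMeasure (hd : ∀ i, Function.Injective (d i)) :
    SigmaFinite (invariantMeasure d) := by
  let A (n : ℤ) : Set (PhaseSpace d) := (· + (n : PhaseSpace d)) ⁻¹' Set.range (expansion d 0)
  have hA (n : ℤ) : MeasurableSet (A n) :=
    measurable_add_const _ (measurableSet_range_expansion d 0)
  have hAlt (n : ℤ) : invariantMeasure d (A n) < ⊤ := by
    rw [(measurePreserving_add_intCast hd n).measure_preimage
      (measurableSet_range_expansion d 0).nullMeasurableSet]
    exact (invariantMeasure_range_expansion_le hd).trans_lt ENNReal.one_lt_top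
  have hcompl : invariantMeasure d (⋃ n, A n)ᶜ = 0 := by
    refine invariantMeasure_eq_zero hd (MeasurableSet.iUnion hA).compl fun n => ?_
    convert measure_empty (μ := uniformSeq k)
    exact Set.eq_empty_of_forall_notMem fun ω hω => hω (Set.mem_iUnion.2 ⟨-n, ω, by simp⟩)
  refine Measure.sigmaFinite_of_countable (S := insert (⋃ n, A n)ᶜ (Set.range A))
    ((Set.countable_range A).insert _) ?_ ?_
  · rintro s (rfl | ⟨n, rfl⟩)
    · exact hcompl.trans_lt ENNReal.zero_lt_top
    · exact hAlt n
  · rw [Set.sUnion_insert, Set.sUnion_range, Set.compl_union_self]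

end SigmaFinite

section Criteria

variable {d} {p q : ℕ}

lemma eq_of_expansion_eq_add {M n : ℕ} (hp : 0 < p) (hpM : p ≤ M) (hqM : q ≤ M)
    (hd : ∀ i, Function.Injective (d i))
    (hdiff : ∀ i, M ≤ i → ∀ a a' b b' : Fin k,
      (p : ℤ) * (d i b' - d i b) = q * (d i a' - d i a) → a' = a)
    {ω ω' η η' : ℕ → Fin k} (hω : expansion d M ω' = expansion d M ω + n • (p : PhaseSpace d))
    (hη : expansion d M η' = expansion d M η + n • (q : PhaseSpace d)) {i : ℕ} (hi : M ≤ i) :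
    ω' i = ω i ∧ η' i = η i := by
  induction i using Nat.strong_induction_on with
  | _ i ih =>
    have hω₁ := weight_dvd_of_expansion_eq_add (n := n * p) hi (by simpa using hω)
      fun j hj hji => (ih j hji hj).1
    have hη₁ := weight_dvd_of_expansion_eq_add (n := n * q) hi (by simpa using hη)
      fun j hj hji => (ih j hji hj).2
    have hpq : (p : ℤ) * (d i (η' i) - d i (η i)) = q * (d i (ω' i) - d i (ω i)) :=
      natCast_mul_digit_sub_eq (by omega) (by omega)
        ((dvd_sub (hω₁.mul_left q) (hη₁.mul_left p)).trans (dvd_of_eq (by ring)))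
    have hωi : ω' i = ω i := hdiff i hi _ _ _ _ hpq
    rw [hωi, sub_self, mul_zero, mul_eq_zero, sub_eq_zero] at hpq
    exact ⟨hωi, hd i (by omega)⟩

variable [NeZero k]

lemma not_isConservativeMap_add (hd : ∀ i, Function.Injective (d i)) (hp : 0 < p)
    (hdiff : ∀ᶠ i in atTop, ∀ a a' b b' : Fin k,
      (p : ℤ) * (d i b' - d i b) = q * (d i a' - d i a) → a' = a) :
    ¬ IsConservativeMap ((invariantMeasure d).prod (invariantMeasure d))
      (· + ((p : PhaseSpace d), (q : PhaseSpace d))) := by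
  intro hcons
  have := sigmaFinite_invariantMeasure hd
  obtain ⟨M, hM, hpM, hqM⟩ := ((eventually_forall_ge_atTop.2 hdiff).and
    ((eventually_ge_atTop p).and (eventually_ge_atTop q))).exists
  let A := Set.range (expansion d M)
  have hA : MeasurableSet A := measurableSet_range_expansion d M
  have hlaw : law d M 0 A ≠ 0 := by simp [law_apply d M 0 hA, A]
  have hpos : 0 < invariantMeasure d A :=
    (pos_iff_ne_zero.2 hlaw).trans_le (law_le_invariantMeasure hd M 0 A)
  obtain ⟨n, hn, hret⟩ := hcons (A ×ˢ A) (hA.prod hA) (by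
    rw [Measure.prod_prod]; exact ENNReal.mul_pos hpos.ne' hpos.ne')
  rw [add_right_iterate] at hret
  obtain ⟨⟨_, _⟩, ⟨⟨ω', hω⟩, η', hη⟩, ⟨ω, rfl⟩, η, rfl⟩ := nonempty_of_measure_ne_zero hret.ne'
  have hωω' : expansion d M ω' = expansion d M ω := expansion_congr fun i hi =>
    (eq_of_expansion_eq_add hp hpM hqM hd hM hω hη hi).1
  have hzero : n • (p : PhaseSpace d) = 0 := by simpa [hωω'] using hω
  have hnp : (n * p : ℤ) = 0 := intCast_eq_zero_iff.1 (by simpa using hzero)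
  exact (Nat.mul_pos hn hp).ne' (mod_cast hnp)

lemma exists_law_prod_law_ne_zero (hd : ∀ i, Function.Injective (d i))
    {B : Set (PhaseSpace d × PhaseSpace d)} (hB : MeasurableSet B)
    (h0 : ((invariantMeasure d).prod (invariantMeasure d)) B ≠ 0) :
    ∃ s t : ℤ, ((law d 0 s).prod (law d 0 t)) B ≠ 0 := by
  have := sigmaFinite_invariantMeasure hd
  by_contra! hnull
  have hac := invariantMeasure_absolutelyContinuous hd
  refine h0 (hac.prod hac ?_)
  rw [Measure.prod_sum, Measure.sum_apply_eq_zero' hB]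
  exact fun z => hnull z.1 z.2

lemma isConservativeMap_add (hd : ∀ i, Function.Injective (d i))
    (hdiff : ∃ᶠ i in atTop, ∃ a a' b b' : Fin k, d i a' = d i a + p ∧ d i b' = d i b + q) :
    IsConservativeMap ((invariantMeasure d).prod (invariantMeasure d))
      (· + ((p : PhaseSpace d), (q : PhaseSpace d))) := by
  have := sigmaFinite_invariantMeasure hd
  intro B hB hpos
  obtain ⟨s, t, hst⟩ := exists_law_prod_law_ne_zero hd hB hpos.ne'
  let Φ : (ℕ → Fin k) × (ℕ → Fin k) → PhaseSpace d × PhaseSpace d :=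
    Prod.map (fun ω => expansion d 0 ω + (s : PhaseSpace d))
      (fun ω => expansion d 0 ω + (t : PhaseSpace d))
  have hΦ : Measurable Φ :=
    (measurable_expansion_add d 0 s).prodMap (measurable_expansion_add d 0 t)
  have hmap : (law d 0 s).prod (law d 0 t) = ((uniformSeq k).prod (uniformSeq k)).map Φ := by
    simp only [law, pow_zero, one_smul]
    exact Measure.map_prod_map _ _ (measurable_expansion_add d 0 s) (measurable_expansion_add d 0 t)
  rw [hmap, Measure.map_apply hΦ hB] at hst
  obtain ⟨i, ⟨a, a', b, b', ha, hb⟩, hi⟩ := (hdiff.and_eventually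
    (eventually_measure_forall_update_mem_pos (hB.preimage hΦ) hst)).exists
  refine ⟨weight d i, weight_pos d i, ?_⟩
  rw [add_right_iterate]
  set C := (· + weight d i • ((p : PhaseSpace d), (q : PhaseSpace d))) ⁻¹' B ∩ B
  have hC : MeasurableSet C := (measurable_add_const _ hB).inter hB
  have hΦC : ((uniformSeq k).prod (uniformSeq k)) (Φ ⁻¹' C) ≠ 0 := fun hnull => by
    refine hi.ne' (measure_mono_null (fun z hz => ?_)
      ((QuasiMeasurePreserving.prodMap (quasiMeasurePreserving_update i a)
        (quasiMeasurePreserving_update i b)).preimage_null hnull))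
    refine ⟨?_, hz a b⟩
    convert hz a' b' using 1
    simp only [Φ, Prod.map, Set.mem_preimage, expansion_update _ ha, expansion_update _ hb,
      Prod.mk_add_mk, Prod.smul_mk, add_right_comm]
  calc 0 < ((law d 0 s).prod (law d 0 t)) C := by
        rw [hmap, Measure.map_apply hΦ hC]; exact pos_iff_ne_zero.2 hΦC
    _ ≤ ((invariantMeasure d).prod (invariantMeasure d)) C :=
        Measure.prod_mono (law_le_invariantMeasure hd 0 s) (law_le_invariantMeasure hd 0 t) C

end Criteria

section PairDigits

/-- The four digits that the pair `(u, v)` contributes to one place: at a single moment the digit of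
one coordinate can grow from `0` to `u` while that of another grows from `L` to `L + v`. The gap `L`
is to be taken much larger than `u` and `v`. -/
def pairDigit (u v L : ℕ) : Fin 4 → ℕ := ![0, u, L, L + v]

variable {p q u v L : ℕ}

lemma strictMono_pairDigit (hu : 0 < u) (huL : u < L) (hv : 0 < v) :
    StrictMono (pairDigit u v L) := by
  simp [pairDigit, hu, huL, hv]

lemma natAbs_pairDigit_sub (huv : u < v) (a b : Fin 4) :
    let δ := ((pairDigit u v L a : ℤ) - pairDigit u v L b).natAbs
    δ = 0 ∨ δ = u ∨ δ = v ∨ L ≤ δ + u ∧ δ ≤ L + v := by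
  have hcases (c : Fin 4) : pairDigit u v L c = 0 ∨ pairDigit u v L c = u ∨
      pairDigit u v L c = L ∨ pairDigit u v L c = L + v := by
    fin_cases c <;> simp [pairDigit]
  have ha := hcases a
  have hb := hcases b
  simp only
  omega

lemma eq_and_eq_of_mul_eq_mul (hp : 0 < p) (hpq : p < q) (hu : 0 < u) (huv : u < v)
    (hL : (q + 2 * p + 1) * v ≤ L) {α β : ℕ} (hα : α = u ∨ α = v ∨ L ≤ α + u ∧ α ≤ L + v)
    (hβ : β = u ∨ β = v ∨ L ≤ β + u ∧ β ≤ L + v) (h : q * α = p * β) : α = u ∧ β = v := by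
  have hvL : 2 * v ≤ L := by nlinarith
  have hα_pos : 0 < α := by omega
  have hαβ : α < β := by nlinarith
  have hα_le : α ≤ v := by
    by_contra! hlt
    have hβα : β ≤ α + (u + v) := by omega
    have hα_le : α ≤ p * (u + v) := by
      have hp_mul : p * β ≤ p * (α + (u + v)) := Nat.mul_le_mul_left p hβα
      have hq_mul : (p + 1) * α ≤ q * α := Nat.mul_le_mul_right α hpq
      linarith
    nlinarith [Nat.mul_le_mul_left p huv.le, show L ≤ α + u by omega]
  have hβ_le : β ≤ v := by
    by_contra! hlt
    have hβq : β ≤ q * v := by nlinarith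
    nlinarith [show L ≤ β + u by omega]
  omega

lemma eq_of_mul_pairDigit_sub_eq (hp : 0 < p) (hpq : p < q) (hu : 0 < u) (huv : u < v)
    (hL : (q + 2 * p + 1) * v ≤ L) (hne : p * v ≠ q * u) {a a' b b' : Fin 4}
    (h : (p : ℤ) * (pairDigit u v L b' - pairDigit u v L b) =
      q * (pairDigit u v L a' - pairDigit u v L a)) : a' = a := by
  have hα := natAbs_pairDigit_sub (L := L) huv a' a
  have hβ := natAbs_pairDigit_sub (L := L) huv b' b
  have habs := congrArg Int.natAbs h
  rw [Int.natAbs_mul, Int.natAbs_mul, Int.natAbs_natCast, Int.natAbs_natCast] at habs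
  by_contra hmove
  have hα0 : ((pairDigit u v L a' : ℤ) - pairDigit u v L a).natAbs ≠ 0 := by
    have hvL : v ≤ L := by nlinarith
    simpa [sub_eq_zero] using
      (strictMono_pairDigit hu (huv.trans_le hvL) (hu.trans huv)).injective.ne hmove
  have hβ0 : ((pairDigit u v L b' : ℤ) - pairDigit u v L b).natAbs ≠ 0 := fun hβ0 => by
    rw [hβ0, mul_zero, zero_eq_mul] at habs
    omega
  obtain ⟨hαu, hβv⟩ := eq_and_eq_of_mul_eq_mul hp hpq hu huv hL
    (hα.resolve_left hα0) (hβ.resolve_left hβ0) habs.symm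
  exact hne (by rwa [hαu, hβv] at habs)

end PairDigits

section RatioDigits

variable (R : Set ℚ)

open Classical in
/-- A sequence of pairs `(u, v)` with `0 < u < v`, in which every such pair with `u / v ∈ R` occurs
infinitely often, while every ratio outside `R` occurs only finitely often: the places not used for
`R` are filled with the pairs `(1, i + 2)`. -/
noncomputable def ratioPair (i : ℕ) : ℕ × ℕ :=
  let z := Nat.unpair (Nat.unpair i).1
  if 0 < z.1 ∧ z.1 < z.2 ∧ (z.1 / z.2 : ℚ) ∈ R then z else (1, i + 2)

lemma ratioPair_pos (i : ℕ) : 0 < (ratioPair R i).1 := by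
  simp only [ratioPair]
  split_ifs with h
  exacts [h.1, one_pos]

lemma ratioPair_fst_lt_snd (i : ℕ) : (ratioPair R i).1 < (ratioPair R i).2 := by
  simp only [ratioPair]
  split_ifs with h
  exacts [h.2.1, by omega]

variable {R} {p q : ℕ}

lemma frequently_ratioPair_eq (hp : 0 < p) (hpq : p < q) (hR : (p / q : ℚ) ∈ R) :
    ∃ᶠ i in atTop, ratioPair R i = (p, q) :=
  frequently_atTop.2 fun N =>
    ⟨Nat.pair (Nat.pair p q) N, Nat.right_le_pair _ _, by simp [ratioPair, hp, hpq, hR]⟩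

lemma mul_ratioPair_ne (hp : 0 < p) (hpq : p < q) (hR : (p / q : ℚ) ∉ R) {i : ℕ} (hi : q ≤ i) :
    p * (ratioPair R i).2 ≠ q * (ratioPair R i).1 := by
  intro heq
  simp only [ratioPair] at heq
  generalize Nat.unpair (Nat.unpair i).1 = z at heq
  split_ifs at heq with hz
  · have hq₀ : (q : ℚ) ≠ 0 := mod_cast (hp.trans hpq).ne'
    have hz₀ : (z.2 : ℚ) ≠ 0 := mod_cast hz.2.1.ne_bot
    have hdiv : (p / q : ℚ) = z.1 / z.2 :=
      (div_eq_div_iff hq₀ hz₀).2 (mod_cast heq.trans (mul_comm _ _))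
    exact hR (hdiv ▸ hz.2.2)
  · nlinarith

variable (R) in
/-- The allowed digits at place `i`: those of the pair `ratioPair R i`, with a gap tending to
infinity relative to the pair. -/
noncomputable def ratioDigit (i : ℕ) : Fin 4 → ℕ :=
  pairDigit (ratioPair R i).1 (ratioPair R i).2 ((i + 3) * (ratioPair R i).2)

variable (R) in
lemma injective_ratioDigit (i : ℕ) : Function.Injective (ratioDigit R i) := by
  have hu := ratioPair_pos R i
  have huv := ratioPair_fst_lt_snd R i
  have hvL : (ratioPair R i).2 ≤ (i + 3) * (ratioPair R i).2 :=
    Nat.le_mul_of_pos_left _ (by omega)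
  exact (strictMono_pairDigit hu (huv.trans_le hvL) (hu.trans huv)).injective

lemma isConservativeMap_add_ratioDigit_iff (hp : 0 < p) (hpq : p < q) :
    IsConservativeMap ((invariantMeasure (ratioDigit R)).prod (invariantMeasure (ratioDigit R)))
      (· + ((p : PhaseSpace (ratioDigit R)), (q : PhaseSpace (ratioDigit R)))) ↔
      (p / q : ℚ) ∈ R := by
  refine ⟨fun hcons => ?_, fun hR => isConservativeMap_add (injective_ratioDigit R) ?_⟩
  · by_contra hR
    refine not_isConservativeMap_add (injective_ratioDigit R) hp ?_ hcons
    filter_upwards [eventually_ge_atTop (3 * q)] with i hi a a' b b'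
    exact eq_of_mul_pairDigit_sub_eq hp hpq (ratioPair_pos R i) (ratioPair_fst_lt_snd R i)
      (Nat.mul_le_mul_right _ (by omega)) (mul_ratioPair_ne hp hpq hR (by omega))
  · refine (frequently_ratioPair_eq hp hpq hR).mono fun i hi => ⟨0, 1, 2, 3, ?_⟩
    simp [ratioDigit, pairDigit, hi]

end RatioDigits

end DigitExpansion

theorem stmt6 (R : Set ℚ) (hR : R ⊆ {r : ℚ | 0 < r ∧ r < 1}) :
    ∃ (X : Type) (_ : MeasurableSpace X) (_ : StandardBorelSpace X)
      (μ : Measure X) (_ : NoAtoms μ) (_ : SigmaFinite μ) (T : X ≃ᵐ X),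
      μ Set.univ = ⊤ ∧ MeasurePreserving T μ μ ∧
      ∀ p q : ℕ, 0 < p → p < q →
        (IsConservativeMap (μ.prod μ)
            (fun z : X × X => ((⇑T)^[p] z.1, (⇑T)^[q] z.2)) ↔
          ((p : ℚ) / (q : ℚ)) ∈ R) := by
  have hd := DigitExpansion.injective_ratioDigit R
  refine ⟨DigitExpansion.PhaseSpace (DigitExpansion.ratioDigit R), inferInstance, inferInstance,
    DigitExpansion.invariantMeasure _, DigitExpansion.nullSingletonClass_invariantMeasure hd,
    DigitExpansion.sigmaFinite_invariantMeasure hd, MeasurableEquiv.addRight 1,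
    DigitExpansion.invariantMeasure_univ hd, DigitExpansion.measurePreserving_add_one hd,
    fun p q hp hpq => ?_⟩
  rw [MeasurableEquiv.coe_addRight, prod_iterate_add_one]
  exact DigitExpansion.isConservativeMap_add_ratioDigit_iff hp hpq
end

section
/- For each subset R of ℚ ∩ (0,1), there exists a standard Borel space X with a nonatomic σ-finite Borel measure μ satisfying μ(X) = ∞, and an invertible measure-preserving transformation T : X → X, such that for all natural numbers p, q with 0 < p < q: if p/q ∈ R, then both T^p × T^q and T^{−p} × T^q (where T^{−p} denotes the p-th power of the inverse of T) are conservative and ergodic on (X × X, μ × μ), and if p/q ∉ R, then T^p × T^q is not ergodic. -/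
/-!
The transformation is built from a countable group action, as in a cutting-and-stacking
construction with prescribed displacements.

Let digits `c k : ℤ/4 → ℤ` be given for each `k : ℕ`. The group `⨁ ℤ/4` of finite digit changes
acts on `∏ ℤ/4 × ℤ` by `γ +ᵥ (x, m) = (γ + x, m - d γ x)`, where
`d γ x = ∑ k, (c k (γ k + x k) - c k (x k))`. If no nonzero `γ` preserves the height of a point, the
orbit space is standard Borel, and the product of the Haar probability and the counting measure
induces a σ-finite nonatomic measure on it through a fundamental domain. The transformation is
induced by `m ↦ m + 1`, which commutes with the action.

*Positive direction.* Suppose that for all `n, n'` there are infinitely many `k` such that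
`a p + n` and `a q + n'`, for some common `a > 0`, are differences of digits of index `k`. A set of
pairs of positive measure meets its translates under late digit changes, even when the digits before
the change are prescribed. Hence late digit changes realize all displacements `(a p + n, a q + n')`
inside such a set. Finite digit changes connect any two sets of positive measure, at the cost of a
displacement which `n, n'` compensate.

*Negative direction.* Suppose that `q d γ x = p d γ' x'` has no solution with `γ ≠ 0` among the
changes of late digits. Then the orbit of a product of two small cylinders at height `0` misses
another such product.

*Choice of the digits.* The digits of index `k` are `0`, `a p + s`, `b`, `b + a q + t`, where
`p / q` runs through `R` and `s, t` through `ℤ`, every choice occurring infinitely often, while `a`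
and `b` grow so fast that `b` dominates `a` and both dominate all displacements at smaller indices.
The pairs of digits `(0, 1)` and `(2, 3)` serve the positive direction, for `p` and for `-p`. If
`p' / q' < 1` is not in `R`, then no nontrivial combination of late digit differences with
coefficients `q', -p'` is small, because the coefficients of `b` and of `a` do not both cancel. The
measure is infinite because the levels at the heights `2 M i` are pairwise disjoint, where `M i`
bounds the displacements at indices below `i`.
-/

open MeasureTheory

/-- `T` is *ergodic* w.r.t. `μ`: every measurable set `A` with `T⁻¹ A = A` mod `μ`
is null or conull. -/
def IsErgodicMap {X : Type*} [MeasurableSpace X] (μ : Measure X) (T : X → X) : Prop :=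
  ∀ A : Set X, MeasurableSet A → μ (symmDiff (T ⁻¹' A) A) = 0 →
    μ A = 0 ∨ μ Aᶜ = 0

section Transitive

variable {X : Type*} [MeasurableSpace X] {μ : Measure X} {f : X → X}

/-- `f` is *transitive* w.r.t. `μ`: any set of positive measure is visited, at a positive time, by a
non-null part of any other. Conservativity and ergodicity are both deduced from this. -/
def IsTransitiveMap (μ : Measure X) (f : X → X) : Prop :=
  ∀ A B : Set X, MeasurableSet A → MeasurableSet B → μ A ≠ 0 → μ B ≠ 0 →
    ∃ n : ℕ, 0 < n ∧ μ (f^[n] ⁻¹' B ∩ A) ≠ 0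

theorem IsTransitiveMap.isConservativeMap (h : IsTransitiveMap μ f) : IsConservativeMap μ f := by
  intro A hA hA0
  obtain ⟨n, hn, hA'⟩ := h A A hA hA hA0.ne' hA0.ne'
  exact ⟨n, hn, pos_iff_ne_zero.2 hA'⟩

theorem IsTransitiveMap.isErgodicMap (h : IsTransitiveMap μ f)
    (hf : Measure.QuasiMeasurePreserving f μ μ) : IsErgodicMap μ f := by
  intro A hA hinv
  by_contra! hne
  obtain ⟨n, -, hn⟩ := h Aᶜ A hA.compl hA hne.2 hne.1
  have hiter : f^[n] ⁻¹' A =ᵐ[μ] A :=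
    hf.preimage_iterate_ae_eq n (measure_symmDiff_eq_zero_iff.1 hinv)
  refine hn ?_
  rw [measure_congr (hiter.inter (ae_eq_refl (Aᶜ : Set X)))]
  simp

theorem not_isErgodicMap_of_forall_notMem {f : ℤ → X → X} {g : X → X}
    (hf : ∀ n, Measurable (f n)) (hf_zero : ∀ x, f 0 x = x) (hfg : ∀ n x, f n (g x) = f (n + 1) x)
    {S S' : Set X} (hS : MeasurableSet S) (hS0 : μ S ≠ 0) (hS0' : μ S' ≠ 0)
    (h : ∀ n, ∀ x ∈ S', f n x ∉ S) : ¬ IsErgodicMap μ g := by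
  intro herg
  have hinv : g ⁻¹' (⋃ n, f n ⁻¹' S) = ⋃ n, f n ⁻¹' S := by
    ext x
    simp only [Set.mem_preimage, Set.mem_iUnion, hfg]
    exact (Equiv.addRight (1 : ℤ)).exists_congr_right (q := fun n => f n x ∈ S)
  rcases herg _ (.iUnion fun n => hf n hS) (by rw [hinv, symmDiff_self]; exact measure_empty)
    with hnull | hfull
  · refine hS0 (measure_mono_null (fun x hx => Set.mem_iUnion.2 ⟨0, ?_⟩) hnull)
    rwa [Set.mem_preimage, hf_zero]
  · have hmiss : S' ⊆ (⋃ n, f n ⁻¹' S)ᶜ := by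
      intro x hx hx'
      obtain ⟨n, hn⟩ := Set.mem_iUnion.1 hx'
      exact h n x hx hn
    exact hS0' (measure_mono_null hmiss hfull)

end Transitive

/-! ### Translates of sets of positive measure -/

section Translates

variable {G : Type*} [AddCommGroup G] [TopologicalSpace G] [IsTopologicalAddGroup G]
  [MeasurableSpace G] [BorelSpace G] {μ : Measure G} [IsFiniteMeasure μ] [μ.InnerRegular]
  [μ.IsAddLeftInvariant] {W W' : Set G}

theorem exists_measure_inter_preimage_add_ne_zero [SecondCountableTopology G] {Γ : Type*}
    [AddGroup Γ] [Countable Γ] {φ : Γ →+ G} (hφ : DenseRange φ) (hW : MeasurableSet W')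
    (hW0 : μ W ≠ 0) (hW0' : μ W' ≠ 0) : ∃ γ, μ {x ∈ W | φ γ + x ∈ W'} ≠ 0 := by
  set S : Set G := ⋃ γ, (φ γ + ·) ⁻¹' W' with hS
  have hS_meas : MeasurableSet S := .iUnion fun γ => hW.preimage (measurable_const_add _)
  have hS_inv : ∀ γ, (φ γ +ᵥ ·) ⁻¹' S = S := by
    intro γ
    ext x
    simp only [hS, Set.mem_preimage, Set.mem_iUnion, vadd_eq_add]
    rw [← (Equiv.addRight γ).exists_congr_right (q := fun γ' => φ γ' + x ∈ W')]
    simp [add_assoc]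
  have hS_const : Filter.EventuallyConst S (ae μ) :=
    aeconst_of_dense_setOfPred_preimage_vadd_eq (M := G) hS_meas.nullMeasurableSet
      (hφ.mono (Set.range_subset_iff.2 hS_inv))
  by_contra! h0
  have hWS : μ (W ∩ S) = 0 := by
    rw [hS, Set.inter_iUnion]
    exact measure_iUnion_null h0
  rcases Filter.eventuallyConst_set.1 hS_const with hfull | hnull
  · exact hW0 (by rwa [Set.inter_comm, Measure.measure_inter_eq_of_ae hfull] at hWS)
  · refine hW0' (measure_mono_null (t := S) (fun x hx => ?_) ?_)
    · exact Set.mem_iUnion.2 ⟨0, by simpa using hx⟩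
    · simpa using ae_iff.1 hnull

open Filter Topology

theorem tendsto_measure_sdiff_preimage_add {α : Type*} {l : Filter α} {g : α → G}
    (hg : Tendsto g l (𝓝 0)) (hW : MeasurableSet W) :
    Tendsto (fun a => μ (W \ {x | x + g a ∈ W})) l (𝓝 0) := by
  let τ : C(G, C(G, G)) := ContinuousMap.curry ⟨fun p => p.2 + p.1, by fun_prop⟩
  have hτ : ∀ y, MeasurePreserving (τ y) μ μ := measurePreserving_add_right μ
  have hsymm := tendsto_measure_symmDiff_preimage_nhds_zero ((τ.continuous.tendsto 0).comp hg)
    (.of_forall fun a => hτ (g a)) (hτ 0) hW.nullMeasurableSet (measure_ne_top μ W)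
  refine tendsto_of_tendsto_of_tendsto_of_le_of_le tendsto_const_nhds hsymm
    (fun _ => zero_le) fun a => measure_mono fun x hx => ?_
  exact Or.inr ⟨by simpa [τ] using hx.1, hx.2⟩

theorem eventually_measure_iInter_preimage_add_ne_zero {ι α : Type*} [Finite ι]
    {l : Filter α} {g : ι → α → G} (hg : ∀ i, Tendsto (g i) l (𝓝 0)) (hW : MeasurableSet W)
    (hW0 : μ W ≠ 0) : ∀ᶠ a in l, μ (⋂ i, {x | x + g i a ∈ W}) ≠ 0 := by
  cases nonempty_fintype ι
  have hsum : Tendsto (fun a => ∑ i, μ (W \ {x | x + g i a ∈ W})) l (𝓝 0) := by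
    simpa using tendsto_finsetSum Finset.univ fun i _ =>
      tendsto_measure_sdiff_preimage_add (hg i) hW
  filter_upwards [hsum.eventually_lt_const (pos_iff_ne_zero.2 hW0)] with a ha hnull
  refine ha.not_ge ?_
  calc μ W ≤ μ ((⋂ i, {x | x + g i a ∈ W}) ∪ ⋃ i, W \ {x | x + g i a ∈ W}) := by
        refine measure_mono fun x hx => ?_
        by_cases h : ∀ i, x + g i a ∈ W
        · exact Or.inl (Set.mem_iInter.2 h)
        · obtain ⟨i, hi⟩ := not_forall.1 h
          exact Or.inr (Set.mem_iUnion.2 ⟨i, hx, hi⟩)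
    _ ≤ 0 + μ (⋃ i, W \ {x | x + g i a ∈ W}) := hnull ▸ measure_union_le _ _
    _ ≤ ∑ i, μ (W \ {x | x + g i a ∈ W}) := by
        rw [zero_add]
        exact measure_iUnion_fintype_le μ _

theorem eventually_measure_fiber_inter_preimage_add_ne_zero {H κ : Type*}
    [AddGroup H] [Finite H]
    {l : Filter κ} {e : κ → H →+ G} {π : κ → G → H} (he : ∀ h, Tendsto (e · h) l (𝓝 0))
    (hπ : ∀ k x h, π k (x + e k h) = π k x + h) (hW : MeasurableSet W) (hW0 : μ W ≠ 0) :
    ∀ᶠ k in l, ∀ h h', μ {x ∈ W | π k x = h ∧ x + e k h' ∈ W} ≠ 0 := by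
  filter_upwards [eventually_measure_iInter_preimage_add_ne_zero he hW hW0] with k hk h h' hnull
  refine hk ?_
  have hcover : (⋂ i, {x | x + e k i ∈ W}) ⊆
      ⋃ i, (· + e k i) ⁻¹' {x ∈ W | π k x = h ∧ x + e k h' ∈ W} := by
    intro x hx
    rw [Set.mem_iInter] at hx
    refine Set.mem_iUnion.2 ⟨-π k x + h, hx _, ?_, ?_⟩
    · rw [hπ, add_neg_cancel_left]
    · simpa [add_assoc] using hx (-π k x + h + h')
  refine measure_mono_null hcover (measure_iUnion_null fun i => ?_)
  rw [measure_preimage_add_right, hnull]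

end Translates

/-! ### Orbit spaces of height cocycles -/

theorem standardBorelSpace_of_measurableEmbedding_of_surjective {α β : Type*} [MeasurableSpace α]
    [StandardBorelSpace α] [MeasurableSpace β] {f : α → β} (hf : MeasurableEmbedding f)
    (hsurj : f.Surjective) : StandardBorelSpace β := by
  obtain ⟨_, _, _⟩ := StandardBorelSpace.polish (α := α)
  let e : α ≃ β := .ofBijective f ⟨hf.injective, hsurj⟩
  have he : MeasurableEmbedding e.symm :=
    { injective := e.symm.injective
      measurable := fun s hs => e.image_eq_preimage_symm s ▸ hf.measurableSet_image' hs
      measurableSet_image' := fun s hs => e.symm.image_eq_preimage_symm s ▸ hf.measurable hs }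
  let _ : TopologicalSpace β := .induced e.symm inferInstance
  refine ⟨_, ⟨?_⟩, e.symm.polishSpace_induced⟩
  rw [← he.comap_eq, BorelSpace.measurable_eq (α := α), borel_comap]

section Quotient

variable {Γ Z : Type*} [AddGroup Γ] [Countable Γ] [AddAction Γ Z] [MeasurableSpace Z]

theorem measurableSet_image_orbitRel_mk [MeasurableConstVAdd Γ Z] {E : Set Z}
    (hE : MeasurableSet E) :
    MeasurableSet (Quotient.mk (AddAction.orbitRel Γ Z) '' E) := by
  refine measurableSet_quotient.2 ?_
  let _ := AddAction.orbitRel Γ Z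
  change MeasurableSet (Quotient.mk' ⁻¹' (Quotient.mk' '' E))
  rw [AddAction.quotient_preimage_image_eq_union_add]
  exact .iUnion fun γ => hE.const_vadd γ

end Quotient

/-- A measurable `ℤ`-valued cocycle of an action of `Γ` on `Y`: `d γ x` is the amount by which `γ`
lowers the height of a point above `x`. -/
structure HeightCocycle (Γ Y : Type*) [AddGroup Γ] [AddAction Γ Y] [MeasurableSpace Y] where
  toFun : Γ → Y → ℤ
  map_add' : ∀ γ γ' x, toFun (γ + γ') x = toFun γ (γ' +ᵥ x) + toFun γ' x
  measurable' : ∀ γ, Measurable (toFun γ)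

namespace HeightCocycle

variable {Γ Y : Type*} [AddGroup Γ] [AddAction Γ Y] [MeasurableSpace Y] {d : HeightCocycle Γ Y}

instance : CoeFun (HeightCocycle Γ Y) fun _ => Γ → Y → ℤ := ⟨toFun⟩

theorem map_add (d : HeightCocycle Γ Y) (γ γ' : Γ) (x : Y) :
    d (γ + γ') x = d γ (γ' +ᵥ x) + d γ' x :=
  d.map_add' γ γ' x

theorem map_zero (d : HeightCocycle Γ Y) (x : Y) : d 0 x = 0 := by
  simpa using d.map_add 0 0 x

theorem measurable (d : HeightCocycle Γ Y) (γ : Γ) : Measurable (d γ) :=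
  d.measurable' γ

/-- No nonzero group element preserves the height of a point. -/
def IsFree (d : HeightCocycle Γ Y) : Prop :=
  ∀ γ x, d γ x = 0 → γ = 0

/-- The space of pairs `(x, m)` of a point `x` and a height `m`, on which `Γ` acts by
`γ +ᵥ (x, m) = (γ +ᵥ x, m - d γ x)`. The type depends on `d` because the action does. -/
def SkewProduct (_ : HeightCocycle Γ Y) := Y × ℤ

instance : MeasurableSpace d.SkewProduct := inferInstanceAs (MeasurableSpace (Y × ℤ))

instance [StandardBorelSpace Y] : StandardBorelSpace d.SkewProduct :=
  inferInstanceAs (StandardBorelSpace (Y × ℤ))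

instance : AddAction Γ d.SkewProduct where
  vadd γ z := (γ +ᵥ z.1, z.2 - d γ z.1)
  zero_vadd z := Prod.ext (zero_vadd Γ z.1) (by
    change z.2 - d 0 z.1 = z.2
    rw [d.map_zero, sub_zero])
  add_vadd γ γ' z := Prod.ext (add_vadd γ γ' z.1) (by
    change z.2 - d (γ + γ') z.1 = z.2 - d γ' z.1 - d γ (γ' +ᵥ z.1)
    rw [d.map_add]
    ring)

/-- The product of a measure on `Y` and the counting measure of heights. -/
noncomputable def skewMeasure (d : HeightCocycle Γ Y) (P : Measure Y) : Measure d.SkewProduct :=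
  P.prod (Measure.count : Measure ℤ)

/-- The space of orbits of `Γ` on `d.SkewProduct`. -/
abbrev OrbitSpace (d : HeightCocycle Γ Y) := AddAction.orbitRel.Quotient Γ d.SkewProduct

/-- The orbit of the pair `(x, m)`. -/
def level (d : HeightCocycle Γ Y) (m : ℤ) (x : Y) : d.OrbitSpace :=
  Quotient.mk (AddAction.orbitRel Γ d.SkewProduct) (x, m)

theorem level_eq_level_iff {m m' : ℤ} {x x' : Y} :
    d.level m x = d.level m' x' ↔ ∃ γ : Γ, γ +ᵥ x' = x ∧ d γ x' = m' - m := by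
  refine Quotient.eq.trans (exists_congr fun γ => Prod.ext_iff.trans (and_congr_right fun _ => ?_))
  change m' - d γ x' = m ↔ _
  constructor <;> intro h <;> linarith

theorem exists_level_eq (u : d.OrbitSpace) : ∃ m x, d.level m x = u :=
  let ⟨z, hz⟩ := Quotient.exists_rep u
  ⟨z.2, z.1, hz⟩

theorem level_injective (hd : d.IsFree) (m : ℤ) : (d.level m).Injective := by
  intro x x' h
  obtain ⟨γ, rfl, hγ⟩ := level_eq_level_iff.1 h
  rw [hd γ x' (by rw [hγ, sub_self]), zero_vadd]

/-- The pairs whose height is `e`-minimal among the heights occurring in their orbit. The choice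
of the priority `e` does not matter for the measure on the orbit space
(`orbitMeasure_eq_map_restrict`), so that any given height may be assumed to come first. -/
def firstHeightDomain (d : HeightCocycle Γ Y) (e : ℤ → ℕ) : Set d.SkewProduct :=
  {z | ∀ γ : Γ, e z.2 ≤ e (γ +ᵥ z).2}

theorem eq_zero_of_vadd_mem_firstHeightDomain (hd : d.IsFree) {e : ℤ → ℕ} (he : e.Injective)
    {γ : Γ} {z : d.SkewProduct} (hz : z ∈ d.firstHeightDomain e)
    (hγz : γ +ᵥ z ∈ d.firstHeightDomain e) : γ = 0 := by
  have hle : e (γ +ᵥ z).2 ≤ e z.2 := by simpa using hγz (-γ)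
  have hheight : z.2 - d γ z.1 = z.2 := he (hle.antisymm (hz γ))
  exact hd γ z.1 (by linarith)

theorem existsUnique_vadd_mem_firstHeightDomain (hd : d.IsFree) {e : ℤ → ℕ} (he : e.Injective)
    (z : d.SkewProduct) : ∃! γ : Γ, γ +ᵥ z ∈ d.firstHeightDomain e := by
  let γ₀ := Function.argmin fun γ : Γ => e (γ +ᵥ z).2
  have hγ₀ : γ₀ +ᵥ z ∈ d.firstHeightDomain e := by
    intro γ
    rw [vadd_vadd]
    exact Function.argmin_le (fun γ : Γ => e (γ +ᵥ z).2) (γ + γ₀)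
  refine ⟨γ₀, hγ₀, fun γ hγ => sub_eq_zero.1 ?_⟩
  exact eq_zero_of_vadd_mem_firstHeightDomain hd he hγ₀ (by simpa [vadd_vadd] using hγ)

theorem injOn_mk_firstHeightDomain (hd : d.IsFree) {e : ℤ → ℕ} (he : e.Injective) :
    (d.firstHeightDomain e).InjOn (Quotient.mk (AddAction.orbitRel Γ d.SkewProduct)) := by
  rintro z hz z' hz' h
  obtain ⟨γ, rfl⟩ := Quotient.exact h
  change γ +ᵥ z' = z'
  rw [eq_zero_of_vadd_mem_firstHeightDomain hd he hz' hz, zero_vadd]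

theorem image_level (m : ℤ) (S : Set Y) :
    d.level m '' S =
      Quotient.mk (AddAction.orbitRel Γ d.SkewProduct) '' (S ×ˢ {m} : Set (Y × ℤ)) := by
  rw [Set.prod_singleton]
  exact Set.image_comp (Quotient.mk (AddAction.orbitRel Γ d.SkewProduct)) (·, m) S

theorem iUnion_range_level : ⋃ m, Set.range (d.level m) = Set.univ :=
  Set.eq_univ_of_forall fun u => Set.mem_iUnion.2 (exists_level_eq u)

theorem measurable_level (m : ℤ) : Measurable (d.level m) :=
  measurable_quotient_mk''.comp (measurable_id.prodMk measurable_const)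

/-- The map induced on the orbit space by the translation `(x, m) ↦ (x, m + n)` of heights. -/
def shiftHeight (d : HeightCocycle Γ Y) (n : ℤ) : d.OrbitSpace → d.OrbitSpace :=
  Quotient.map (fun z => (z.1, z.2 + n)) fun z z' h => by
    obtain ⟨γ, rfl⟩ := h
    exact ⟨γ, Prod.ext rfl (add_sub_right_comm z'.2 n (d γ z'.1))⟩

theorem shiftHeight_level (n m : ℤ) (x : Y) : d.shiftHeight n (d.level m x) = d.level (m + n) x :=
  rfl

theorem measurable_shiftHeight (d : HeightCocycle Γ Y) (n : ℤ) : Measurable (d.shiftHeight n) :=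
  measurable_from_quotient.2
    (measurable_quotient_mk''.comp (measurable_fst.prodMk (measurable_snd.add_const n)))

/-- The translation of heights by `n` on the orbit space, as a measurable automorphism. -/
def shift (d : HeightCocycle Γ Y) (n : ℤ) : d.OrbitSpace ≃ᵐ d.OrbitSpace where
  toFun := d.shiftHeight n
  invFun := d.shiftHeight (-n)
  left_inv u := by
    obtain ⟨m, x, rfl⟩ := exists_level_eq u
    simp only [shiftHeight_level, add_neg_cancel_right]
  right_inv u := by
    obtain ⟨m, x, rfl⟩ := exists_level_eq u
    simp only [shiftHeight_level, neg_add_cancel_right]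
  measurable_toFun := d.measurable_shiftHeight n
  measurable_invFun := d.measurable_shiftHeight (-n)

theorem shift_level (n m : ℤ) (x : Y) : d.shift n (d.level m x) = d.level (m + n) x := rfl

theorem shift_shift (n n' : ℤ) (u : d.OrbitSpace) :
    d.shift n (d.shift n' u) = d.shift (n' + n) u := by
  obtain ⟨m, x, rfl⟩ := exists_level_eq u
  simp only [shift_level, add_assoc]

theorem shift_zero (u : d.OrbitSpace) : d.shift 0 u = u := by
  obtain ⟨m, x, rfl⟩ := exists_level_eq u
  rw [shift_level, add_zero]

theorem shift_iterate (n : ℤ) (k : ℕ) : (d.shift n)^[k] = d.shift (k * n) := by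
  induction k with
  | zero => exact funext fun u => by simp [shift_zero]
  | succ k ih =>
    funext u
    rw [Function.iterate_succ_apply', ih, shift_shift, Nat.cast_succ, add_one_mul]

theorem coe_shift_symm (n : ℤ) : ⇑(d.shift n).symm = d.shift (-n) := rfl

theorem prodMap_shift_one_iterate (p q : ℕ) :
    Prod.map (d.shift 1)^[p] (d.shift 1)^[q] = Prod.map (d.shift p) (d.shift q) := by
  rw [shift_iterate, shift_iterate, mul_one, mul_one]

theorem prodMap_shift_one_symm_iterate (p q : ℕ) :
    Prod.map (d.shift 1).symm^[p] (d.shift 1)^[q] = Prod.map (d.shift (-p)) (d.shift q) := by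
  rw [coe_shift_symm, shift_iterate, shift_iterate, mul_one, mul_neg_one]

section MeasurableConstVAdd

variable [MeasurableConstVAdd Γ Y]

instance : MeasurableConstVAdd Γ d.SkewProduct :=
  ⟨fun γ => (measurable_fst.const_vadd γ).prodMk
    (measurable_snd.sub ((d.measurable γ).comp measurable_fst))⟩

variable [Countable Γ]

theorem measurableSet_firstHeightDomain (d : HeightCocycle Γ Y) (e : ℤ → ℕ) :
    MeasurableSet (d.firstHeightDomain e) := by
  have he : Measurable fun z : d.SkewProduct => e z.2 :=
    (measurable_of_countable e).comp measurable_snd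
  simp only [firstHeightDomain, Set.ofPred_forall]
  exact .iInter fun γ => measurableSet_le he (he.comp (measurable_const_vadd γ))

theorem measurableEmbedding_level (hd : d.IsFree) (m : ℤ) : MeasurableEmbedding (d.level m) where
  injective := level_injective hd m
  measurable := measurable_level m
  measurableSet_image' S hS := by
    rw [image_level]
    exact measurableSet_image_orbitRel_mk (hS.prod (measurableSet_singleton m))

theorem standardBorelSpace_orbitSpace [StandardBorelSpace Y] (hd : d.IsFree) :
    StandardBorelSpace d.OrbitSpace := by
  have hdom := d.measurableSet_firstHeightDomain Encodable.encode
  have := hdom.standardBorel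
  let f : d.firstHeightDomain Encodable.encode → d.OrbitSpace := fun z =>
    Quotient.mk (AddAction.orbitRel Γ d.SkewProduct) z
  refine standardBorelSpace_of_measurableEmbedding_of_surjective (f := f) ⟨?_, ?_, ?_⟩ ?_
  · exact (injOn_mk_firstHeightDomain hd Encodable.encode_injective).injective
  · exact measurable_quotient_mk''.comp measurable_subtype_coe
  · intro E hE
    change MeasurableSet ((Quotient.mk _ ∘ Subtype.val) '' E)
    rw [Set.image_comp]
    exact measurableSet_image_orbitRel_mk (hdom.subtype_image hE)
  · intro u
    obtain ⟨z, rfl⟩ := Quotient.exists_rep u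
    obtain ⟨γ, hγ, -⟩ :=
      existsUnique_vadd_mem_firstHeightDomain hd Encodable.encode_injective z
    exact ⟨⟨γ +ᵥ z, hγ⟩, Quotient.sound ⟨γ, rfl⟩⟩

variable {P : Measure Y}

theorem isAddFundamentalDomain_firstHeightDomain (hd : d.IsFree) {e : ℤ → ℕ}
    (he : e.Injective) :
    IsAddFundamentalDomain Γ (d.firstHeightDomain e) (d.skewMeasure P) :=
  .mk' (d.measurableSet_firstHeightDomain e).nullMeasurableSet
    (existsUnique_vadd_mem_firstHeightDomain hd he)

variable [SigmaFinite P] [VAddInvariantMeasure Γ Y P]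

instance : VAddInvariantMeasure Γ d.SkewProduct (d.skewMeasure P) := by
  refine ⟨fun γ E hE => MeasurePreserving.measure_preimage ?_ hE.nullMeasurableSet⟩
  refine MeasurePreserving.skew_product (g := fun x (m : ℤ) => m - d γ x)
    (measurePreserving_vadd γ P) ?_ (.of_forall fun x => ?_)
  · exact measurable_snd.sub ((d.measurable γ).comp measurable_fst)
  · exact (measurePreserving_sub_right Measure.count (d γ x)).map_eq

/-- The measure on the orbit space which `P` and the counting measure of heights induce through a
fundamental domain. -/
noncomputable def orbitMeasure (d : HeightCocycle Γ Y) (P : Measure Y) : Measure d.OrbitSpace :=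
  ((d.skewMeasure P).restrict (d.firstHeightDomain Encodable.encode)).map
    (Quotient.mk (AddAction.orbitRel Γ d.SkewProduct))

theorem orbitMeasure_eq_map_restrict (hd : d.IsFree) {e : ℤ → ℕ} (he : e.Injective) :
    d.orbitMeasure P = ((d.skewMeasure P).restrict (d.firstHeightDomain e)).map
      (Quotient.mk (AddAction.orbitRel Γ d.SkewProduct)) :=
  (isAddFundamentalDomain_firstHeightDomain hd Encodable.encode_injective).addQuotientMeasure_eq
    (d.skewMeasure P) (isAddFundamentalDomain_firstHeightDomain hd he)

theorem orbitMeasure_image_level (hd : d.IsFree) (m : ℤ) {S : Set Y} (hS : MeasurableSet S) :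
    d.orbitMeasure P (d.level m '' S) = P S := by
  let e : ℤ → ℕ := fun n => Encodable.encode (n - m)
  have he : e.Injective := Encodable.encode_injective.comp (sub_left_injective (b := m))
  have hE : S ×ˢ {m} ⊆ d.firstHeightDomain e := by
    rintro ⟨x, n⟩ ⟨-, hn : n = m⟩ γ
    simp [hn, show e m = 0 by simp only [e, sub_self]; rfl]
  rw [orbitMeasure_eq_map_restrict hd he, addMeasure_map_restrict_apply _ _
    ((measurableEmbedding_level hd m).measurableSet_image.2 hS), image_level,
    (injOn_mk_firstHeightDomain hd he).preimage_image_inter hE]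
  exact (Measure.prod_prod S {m}).trans (by simp)

theorem orbitMeasure_range_level (hd : d.IsFree) (m : ℤ) :
    d.orbitMeasure P (Set.range (d.level m)) = P Set.univ := by
  rw [← Set.image_univ, orbitMeasure_image_level hd m .univ]

theorem map_level (hd : d.IsFree) (m : ℤ) :
    P.map (d.level m) = (d.orbitMeasure P).restrict (Set.range (d.level m)) := by
  have hm := measurableEmbedding_level hd m
  ext S hS
  rw [hm.map_apply, Measure.restrict_apply hS, ← Set.image_preimage_eq_inter_range,
    orbitMeasure_image_level hd m (hm.measurable hS)]

theorem sigmaFinite_orbitMeasure (hd : d.IsFree) : SigmaFinite (d.orbitMeasure P) := by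
  let S : ℤ × ℕ → Set d.OrbitSpace := fun i => d.level i.1 '' spanningSets P i.2
  refine Measure.sigmaFinite_of_countable (Set.countable_range S) ?_ ?_
  · rintro _ ⟨⟨m, k⟩, rfl⟩
    exact (orbitMeasure_image_level hd m (measurableSet_spanningSets P k)).trans_lt
      (measure_spanningSets_lt_top P k)
  · rw [Set.sUnion_range, Set.iUnion_prod', ← iUnion_range_level (d := d)]
    exact Set.iUnion_congr fun m => by
      simp only [S, ← Set.image_iUnion, iUnion_spanningSets, Set.image_univ]

theorem nullSingletonClass_orbitMeasure [MeasurableSingletonClass Y] [NullSingletonClass P]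
    (hd : d.IsFree) : NullSingletonClass (d.orbitMeasure P) := by
  refine ⟨fun u => ?_⟩
  obtain ⟨m, x, rfl⟩ := exists_level_eq u
  rw [← Set.image_singleton, orbitMeasure_image_level hd m (measurableSet_singleton x),
    measure_singleton]

theorem measurePreserving_shift (hd : d.IsFree) (n : ℤ) :
    MeasurePreserving (d.shift n) (d.orbitMeasure P) (d.orbitMeasure P) := by
  refine ⟨(d.shift n).measurable, ?_⟩
  let up : d.SkewProduct → d.SkewProduct := fun z => (z.1, z.2 + n)
  let e : ℤ → ℕ := fun m => Encodable.encode (m + n)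
  have he : e.Injective := Encodable.encode_injective.comp (add_left_injective n)
  have hup : MeasurePreserving up (d.skewMeasure P) (d.skewMeasure P) :=
    (MeasurePreserving.id P).prod (measurePreserving_add_right Measure.count n)
  have hdom : up ⁻¹' d.firstHeightDomain Encodable.encode = d.firstHeightDomain e :=
    Set.ext fun z => forall_congr' fun γ => by
      change _ ≤ Encodable.encode (z.2 + n - d γ z.1) ↔ _ ≤ Encodable.encode (z.2 - d γ z.1 + n)
      rw [add_sub_right_comm]
  have hmap := (hup.restrict_preimage (d.measurableSet_firstHeightDomain Encodable.encode)).map_eq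
  calc (d.orbitMeasure P).map (d.shift n)
      = (((d.skewMeasure P).restrict (d.firstHeightDomain e)).map
          (Quotient.mk (AddAction.orbitRel Γ d.SkewProduct))).map (d.shift n) := by
        rw [← orbitMeasure_eq_map_restrict hd he]
    _ = (((d.skewMeasure P).restrict (d.firstHeightDomain e)).map up).map
          (Quotient.mk (AddAction.orbitRel Γ d.SkewProduct)) := by
        rw [Measure.map_map (d.shift n).measurable measurable_quotient_mk'',
          Measure.map_map measurable_quotient_mk'' hup.measurable]
        rfl
    _ = d.orbitMeasure P := by rw [← hdom, hmap, orbitMeasure]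

theorem orbitMeasure_univ_eq_top [NeZero P] (hd : d.IsFree) {h : ℕ → ℤ}
    (hh : ∀ i j, i ≠ j → ∀ γ x, d γ x ≠ h i - h j) : d.orbitMeasure P Set.univ = ⊤ := by
  have hdisj : Pairwise (Function.onFun Disjoint fun i => Set.range (d.level (h i))) := by
    intro i j hij
    rw [Function.onFun, Set.disjoint_left]
    rintro _ ⟨x, rfl⟩ ⟨x', hx⟩
    obtain ⟨γ, -, hγ⟩ := level_eq_level_iff.1 hx
    exact hh i j hij γ x hγ
  refine top_le_iff.1 ?_
  calc ⊤ = ∑' i, d.orbitMeasure P (Set.range (d.level (h i))) := by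
        simp only [orbitMeasure_range_level hd]
        exact (ENNReal.tsum_const_eq_top_of_ne_zero (NeZero.ne (P Set.univ))).symm
    _ = d.orbitMeasure P (⋃ i, Set.range (d.level (h i))) :=
        (measure_iUnion hdisj fun i =>
          (measurableEmbedding_level hd (h i)).measurableSet_range).symm
    _ ≤ d.orbitMeasure P Set.univ := measure_mono (Set.subset_univ _)

theorem map_level_prod (hd : d.IsFree) (m m' : ℤ) :
    (P.prod P).map (Prod.map (d.level m) (d.level m')) =
      ((d.orbitMeasure P).prod (d.orbitMeasure P)).restrict
        (Set.range (d.level m) ×ˢ Set.range (d.level m')) := by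
  have := sigmaFinite_orbitMeasure (P := P) hd
  rw [← Measure.prod_restrict, ← map_level hd, ← map_level hd,
    Measure.map_prod_map P P (measurable_level m) (measurable_level m')]

theorem measure_preimage_level_prod (hd : d.IsFree) (m m' : ℤ)
    {F : Set (d.OrbitSpace × d.OrbitSpace)} (hF : MeasurableSet F) :
    (P.prod P) (Prod.map (d.level m) (d.level m') ⁻¹' F) =
      (d.orbitMeasure P).prod (d.orbitMeasure P)
        (F ∩ Set.range (d.level m) ×ˢ Set.range (d.level m')) := by
  rw [← Measure.map_apply ((measurable_level m).prodMap (measurable_level m')) hF,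
    map_level_prod hd, Measure.restrict_apply hF]

theorem exists_measure_preimage_level_prod_ne_zero (hd : d.IsFree)
    {F : Set (d.OrbitSpace × d.OrbitSpace)} (hF : MeasurableSet F)
    (hF0 : (d.orbitMeasure P).prod (d.orbitMeasure P) F ≠ 0) :
    ∃ m m', (P.prod P) (Prod.map (d.level m) (d.level m') ⁻¹' F) ≠ 0 := by
  by_contra! h0
  refine hF0 (measure_mono_null
    (t := ⋃ m, ⋃ m', F ∩ Set.range (d.level m) ×ˢ Set.range (d.level m')) ?_
    (measure_iUnion_null fun m => measure_iUnion_null fun m' => ?_))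
  · rintro ⟨u, u'⟩ hu
    obtain ⟨m, x, rfl⟩ := exists_level_eq u
    obtain ⟨m', x', rfl⟩ := exists_level_eq u'
    exact Set.mem_iUnion₂.2 ⟨m, m', hu, ⟨x, rfl⟩, ⟨x', rfl⟩⟩
  · rw [← measure_preimage_level_prod hd m m' hF, h0]

/-- Any two non-null sets of pairs are connected by group elements which lower the two heights by
`(a * A + n, a * B + n')` for some `a > 0`, where the remainders `n` and `n'` are prescribed. -/
def PairTransitive (d : HeightCocycle Γ Y) (P : Measure Y) (A B : ℤ) : Prop :=
  ∀ W W' : Set (Y × Y), MeasurableSet W → MeasurableSet W' →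
    (P.prod P) W ≠ 0 → (P.prod P) W' ≠ 0 → ∀ n n' : ℤ, ∃ a : ℕ, 0 < a ∧ ∃ γ γ' : Γ,
      (P.prod P) {w ∈ W | (γ +ᵥ w.1, γ' +ᵥ w.2) ∈ W' ∧
        d γ w.1 = a * A + n ∧ d γ' w.2 = a * B + n'} ≠ 0

theorem PairTransitive.isTransitiveMap {A B : ℤ} (h : d.PairTransitive P A B) (hd : d.IsFree) :
    IsTransitiveMap ((d.orbitMeasure P).prod (d.orbitMeasure P))
      (Prod.map (d.shift A) (d.shift B)) := by
  intro E F hE hF hE0 hF0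
  obtain ⟨m, m', hW0⟩ := exists_measure_preimage_level_prod_ne_zero hd hE hE0
  obtain ⟨l, l', hW0'⟩ := exists_measure_preimage_level_prod_ne_zero hd hF hF0
  have hlevel (i i' : ℤ) : Measurable (Prod.map (d.level i) (d.level i')) :=
    (measurable_level i).prodMap (measurable_level i')
  obtain ⟨a, ha, γ, γ', hpos⟩ :=
    h _ _ (hlevel m m' hE) (hlevel l l' hF) hW0 hW0' (m - l) (m' - l')
  have hmeas : MeasurableSet ((Prod.map (d.shift A) (d.shift B))^[a] ⁻¹' F ∩ E) :=
    (((d.shift A).measurable.prodMap (d.shift B).measurable).iterate a hF).inter hE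
  refine ⟨a, ha, fun h0 => hpos (measure_mono_null (t := Prod.map (d.level m) (d.level m') ⁻¹'
    ((Prod.map (d.shift A) (d.shift B))^[a] ⁻¹' F ∩ E)) ?_ ?_)⟩
  · rintro ⟨x, x'⟩ ⟨hx, hx', hγ, hγ'⟩
    refine ⟨?_, hx⟩
    rw [Set.mem_preimage, Prod.map_iterate, shift_iterate, shift_iterate]
    have hlevel_eq : d.level (m + a * A) x = d.level l (γ +ᵥ x) :=
      (level_eq_level_iff.2 ⟨γ, rfl, by linarith⟩).symm
    have hlevel_eq' : d.level (m' + a * B) x' = d.level l' (γ' +ᵥ x') :=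
      (level_eq_level_iff.2 ⟨γ', rfl, by linarith⟩).symm
    simp only [Prod.map_apply, shift_level, hlevel_eq, hlevel_eq']
    exact hx'
  · rw [measure_preimage_level_prod hd m m' hmeas]
    exact measure_mono_null Set.inter_subset_left h0

theorem PairTransitive.isConservativeMap_and_isErgodicMap {A B : ℤ} (h : d.PairTransitive P A B)
    (hd : d.IsFree) :
    IsConservativeMap ((d.orbitMeasure P).prod (d.orbitMeasure P))
        (Prod.map (d.shift A) (d.shift B)) ∧
      IsErgodicMap ((d.orbitMeasure P).prod (d.orbitMeasure P))
        (Prod.map (d.shift A) (d.shift B)) := by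
  have := sigmaFinite_orbitMeasure (P := P) hd
  have htrans := h.isTransitiveMap hd
  exact ⟨htrans.isConservativeMap, htrans.isErgodicMap
    ((measurePreserving_shift hd A).prod (measurePreserving_shift hd B)).quasiMeasurePreserving⟩

theorem prod_orbitMeasure_image_level_ne_zero (hd : d.IsFree) {S S' : Set Y}
    (hS : MeasurableSet S) (hS' : MeasurableSet S') (hS0 : P S ≠ 0) (hS0' : P S' ≠ 0) (m m' : ℤ) :
    (d.orbitMeasure P).prod (d.orbitMeasure P) ((d.level m '' S) ×ˢ (d.level m' '' S')) ≠ 0 := by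
  have := sigmaFinite_orbitMeasure (P := P) hd
  rw [Measure.prod_prod, orbitMeasure_image_level hd m hS, orbitMeasure_image_level hd m' hS']
  exact mul_ne_zero hS0 hS0'

/-- The set of points whose orbit under the product map meets `level 0 '' V ×ˢ level 0 '' V'` is
invariant and misses `level 0 '' U ×ˢ level 0 '' U'`. -/
theorem not_isErgodicMap_of_forall_ne (hd : d.IsFree) {A B : ℤ} {U U' V V' : Set Y}
    (hU : MeasurableSet U) (hU' : MeasurableSet U') (hU0 : P U ≠ 0) (hU0' : P U' ≠ 0)
    (hV : MeasurableSet V) (hV' : MeasurableSet V') (hV0 : P V ≠ 0) (hV0' : P V' ≠ 0)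
    (hne : ∀ (n : ℤ) (γ γ' : Γ), ∀ x ∈ U, ∀ x' ∈ U', γ +ᵥ x ∈ V → γ' +ᵥ x' ∈ V' →
      d γ x = n * A → d γ' x' ≠ n * B) :
    ¬ IsErgodicMap ((d.orbitMeasure P).prod (d.orbitMeasure P))
      (Prod.map (d.shift A) (d.shift B)) := by
  have hlevel := fun m => measurableEmbedding_level hd m
  refine not_isErgodicMap_of_forall_notMem (S := (d.level 0 '' V) ×ˢ (d.level 0 '' V'))
    (S' := (d.level 0 '' U) ×ˢ (d.level 0 '' U'))
    (f := fun n => Prod.map (d.shift (n * A)) (d.shift (n * B)))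
    (fun n => (d.shift (n * A)).measurable.prodMap (d.shift (n * B)).measurable) ?_ ?_
    (((hlevel 0).measurableSet_image.2 hV).prod ((hlevel 0).measurableSet_image.2 hV'))
    (prod_orbitMeasure_image_level_ne_zero hd hV hV' hV0 hV0' 0 0)
    (prod_orbitMeasure_image_level_ne_zero hd hU hU' hU0 hU0' 0 0) ?_
  · rintro ⟨u, u'⟩
    simp only [zero_mul, Prod.map_apply, shift_zero]
  · rintro n ⟨u, u'⟩
    simp only [Prod.map_apply, shift_shift, add_mul, one_mul, add_comm]
  · rintro n ⟨_, _⟩ ⟨⟨x, hx, rfl⟩, ⟨x', hx', rfl⟩⟩ ⟨⟨y, hy, hyx⟩, ⟨y', hy', hyx'⟩⟩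
    obtain ⟨γ, rfl, hγ⟩ := level_eq_level_iff.1 hyx
    obtain ⟨γ', rfl, hγ'⟩ := level_eq_level_iff.1 hyx'
    exact hne n γ γ' x hx x' hx' hy hy' (by linarith) (by linarith)

end MeasurableConstVAdd

end HeightCocycle

/-! ### Finite digit changes -/

theorem exists_measure_inter_preimage_singleton_ne_zero {α β : Type*} [MeasurableSpace α]
    {μ : Measure α} [Countable β] (f : α → β) {S : Set α} (hS : μ S ≠ 0) :
    ∃ b, μ (S ∩ f ⁻¹' {b}) ≠ 0 := by
  by_contra! h0
  refine hS (measure_mono_null (fun x hx => ?_) (measure_iUnion_null h0))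
  exact Set.mem_iUnion.2 ⟨f x, hx, rfl⟩

section PiSingle

open Filter Topology

variable {ι A : Type*} [TopologicalSpace A]

theorem tendsto_pi_single_cofinite [DecidableEq ι] [Zero A] (u : A) :
    Tendsto (fun k => (Pi.single k u : ι → A)) cofinite (𝓝 0) := by
  refine tendsto_pi_nhds.2 fun j => tendsto_const_nhds.congr' ?_
  filter_upwards [(Set.finite_singleton j).compl_mem_cofinite] with k hk
  exact (Pi.single_eq_of_ne' (M := fun _ => A) hk u).symm

theorem neBot_nhdsNE_zero_pi [Infinite ι] [Zero A] [Nontrivial A] :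
    (𝓝[≠] (0 : ι → A)).NeBot := by
  classical
  obtain ⟨u, hu⟩ := exists_ne (0 : A)
  refine (tendsto_nhdsWithin_iff.2 ⟨tendsto_pi_single_cofinite u, .of_forall fun k => ?_⟩).neBot
  simpa using hu

theorem denseRange_finsupp_coe [Zero A] : DenseRange fun γ : ι →₀ A => ⇑γ := by
  classical
  intro x
  let f (s : Finset ι) : ι →₀ A := Finsupp.indicator s fun i _ => x i
  refine mem_closure_of_tendsto (f := fun s => ⇑(f s)) (b := atTop)
    (tendsto_pi_nhds.2 fun i => ?_) (.of_forall fun s => Set.mem_range_self (f s))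
  refine tendsto_const_nhds.congr' ?_
  filter_upwards [eventually_ge_atTop {i}] with s hs
  exact (Finsupp.indicator_of_mem (hs (Finset.mem_singleton_self i)) fun i _ => x i).symm

theorem eventually_measure_coord_eq_and_add_single_mem_ne_zero [AddCommGroup A]
    [Finite A] [DiscreteTopology A] [MeasurableSpace A] [BorelSpace A] {P : Measure (ℕ → A)}
    [IsFiniteMeasure P] [P.IsAddLeftInvariant] {W : Set ((ℕ → A) × (ℕ → A))}
    (hW : MeasurableSet W) (hW0 : (P.prod P) W ≠ 0) :
    ∀ᶠ k in atTop, ∀ i i' u u', (P.prod P) {w ∈ W | w.1 k = i ∧ w.2 k = i' ∧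
      (w.1 + Pi.single k u, w.2 + Pi.single k u') ∈ W} ≠ 0 := by
  have : (P.prod P).IsAddLeftInvariant := Measure.prod.instIsAddLeftInvariant
  let single (k : ℕ) : A × A →+ (ℕ → A) × (ℕ → A) :=
    (AddMonoidHom.single (fun _ => A) k).prodMap (AddMonoidHom.single (fun _ => A) k)
  have hsingle (u : A × A) : Tendsto (single · u) atTop (𝓝 0) := by
    rw [← Nat.cofinite_eq_atTop]
    exact (tendsto_pi_single_cofinite u.1).prodMk_nhds (tendsto_pi_single_cofinite u.2)
  filter_upwards [eventually_measure_fiber_inter_preimage_add_ne_zero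
    (π := fun k (w : (ℕ → A) × (ℕ → A)) => (w.1 k, w.2 k)) hsingle (by simp [single]) hW hW0]
    with k hk i i' u u'
  have := hk (i, i') (u, u')
  simp only [Prod.mk.injEq, and_assoc] at this
  exact this

end PiSingle

section DigitCocycle

open Filter Topology

/-- Infinitely often, differences of digits of the same index are equal to `a * p + n` and
`a * q + n'` for some common `a > 0`, whatever the remainders `n` and `n'`. -/
def RealizesRatio {A : Type*} (c : ℕ → A → ℤ) (p q : ℤ) : Prop :=
  ∀ n n' : ℤ, ∃ᶠ k in atTop, ∃ a : ℕ, 0 < a ∧ ∃ i j i' j',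
    c k j - c k i = a * p + n ∧ c k j' - c k i' = a * q + n'

theorem RealizesRatio.neg_left {A : Type*} {c : ℕ → A → ℤ} {p q : ℤ}
    (h : RealizesRatio c p q) : RealizesRatio c (-p) q := by
  intro n n'
  refine (h (-n) n').mono fun k ⟨a, ha, i, j, i', j', hij, hij'⟩ => ?_
  exact ⟨a, ha, j, i, i', j', by linear_combination -hij, hij'⟩

variable {A : Type*} [AddCommGroup A]

noncomputable instance : AddAction (ℕ →₀ A) (ℕ → A) := .compHom (ℕ → A) Finsupp.coeFnAddHom

theorem finsupp_vadd_eq (γ : ℕ →₀ A) (x : ℕ → A) : γ +ᵥ x = ⇑γ + x := rfl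

theorem finsupp_single_vadd (k : ℕ) (u : A) (x : ℕ → A) :
    Finsupp.single k u +ᵥ x = x + Pi.single k u := by
  rw [finsupp_vadd_eq, Finsupp.single_eq_pi_single, add_comm]

variable [MeasurableSpace A] [MeasurableSingletonClass A] [Countable A]

instance : MeasurableConstVAdd (ℕ →₀ A) (ℕ → A) :=
  ⟨fun γ => measurable_pi_lambda _ fun k =>
    (measurable_of_countable (γ k + ·)).comp (measurable_pi_apply k)⟩

/-- The cocycle of finite digit changes for which `c k i` is the value of the `k`-th digit `i`: it
is the change of the formal sum `∑ k, c k (x k)`. -/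
noncomputable def digitCocycle (c : ℕ → A → ℤ) : HeightCocycle (ℕ →₀ A) (ℕ → A) where
  toFun γ x := γ.sum fun k u => c k (u + x k) - c k (x k)
  map_add' γ γ' x := by
    classical
    have hsum {δ : ℕ →₀ A} (hδ : δ.support ⊆ γ.support ∪ γ'.support) (y : ℕ → A) :
        (δ.sum fun k u => c k (u + y k) - c k (y k)) =
          ∑ k ∈ γ.support ∪ γ'.support, (c k (δ k + y k) - c k (y k)) :=
      Finsupp.sum_of_support_subset _ hδ _ (by simp)
    rw [hsum Finsupp.support_add, hsum Finset.subset_union_left, hsum Finset.subset_union_right,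
      ← Finset.sum_add_distrib]
    refine Finset.sum_congr rfl fun k _ => ?_
    simp only [finsupp_vadd_eq, Finsupp.add_apply, Pi.add_apply, add_assoc, sub_add_sub_cancel]
  measurable' γ := Finset.measurable_fun_sum _ fun k _ =>
    (measurable_of_countable fun i => c k (γ k + i) - c k i).comp (measurable_pi_apply k)

variable {c : ℕ → A → ℤ}

theorem digitCocycle_apply (γ : ℕ →₀ A) (x : ℕ → A) :
    digitCocycle c γ x = γ.sum fun k u => c k (u + x k) - c k (x k) := rfl

theorem digitCocycle_eq_sum {γ : ℕ →₀ A} {s : Finset ℕ} (hs : γ.support ⊆ s) (x : ℕ → A) :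
    digitCocycle c γ x = ∑ k ∈ s, (c k (γ k + x k) - c k (x k)) := by
  rw [digitCocycle_apply, Finsupp.sum_of_support_subset γ hs _ (by simp)]

theorem digitCocycle_single (k : ℕ) (u : A) (x : ℕ → A) :
    digitCocycle c (Finsupp.single k u) x = c k (u + x k) - c k (x k) := by
  rw [digitCocycle_apply, Finsupp.sum_single_index (by simp)]

/-- No equality `q * d γ x = p * d γ' x'` holds for displacements of digit changes at indices
`k ≥ K`, except when `γ = 0`. -/
def IsSeparated (c : ℕ → A → ℤ) (p q : ℤ) (K : ℕ) : Prop :=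
  ∀ (γ γ' : ℕ →₀ A) (x x' : ℕ → A), (∀ k < K, γ k = 0) → (∀ k < K, γ' k = 0) →
    q * digitCocycle c γ x = p * digitCocycle c γ' x' → γ = 0

variable [TopologicalSpace A] [BorelSpace A] {P : Measure (ℕ → A)}

theorem IsSeparated.not_isErgodicMap [DiscreteTopology A] [Nontrivial A] [SigmaFinite P]
    [VAddInvariantMeasure (ℕ →₀ A) (ℕ → A) P] [P.IsOpenPosMeasure] {p q : ℤ} {K : ℕ}
    (h : IsSeparated c p q K) (hd : (digitCocycle c).IsFree) :
    ¬ IsErgodicMap (((digitCocycle c).orbitMeasure P).prod ((digitCocycle c).orbitMeasure P))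
      (Prod.map ((digitCocycle c).shift p) ((digitCocycle c).shift q)) := by
  obtain ⟨u, hu⟩ := exists_ne (0 : A)
  have hmeas (x : ℕ → A) (n : ℕ) : MeasurableSet (PiNat.cylinder x n) :=
    (PiNat.isOpen_cylinder (fun _ => A) x n).measurableSet
  have hpos (x : ℕ → A) (n : ℕ) : P (PiNat.cylinder x n) ≠ 0 :=
    (PiNat.isOpen_cylinder (fun _ => A) x n).measure_ne_zero P ⟨x, PiNat.self_mem_cylinder x n⟩
  refine HeightCocycle.not_isErgodicMap_of_forall_ne hd (hmeas 0 (K + 1)) (hmeas 0 K)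
    (hpos _ _) (hpos _ _) (hmeas (Pi.single K u) (K + 1)) (hmeas 0 K) (hpos _ _) (hpos _ _) ?_
  intro n γ γ' x hx x' hx' hγx hγx' hn hn'
  simp only [PiNat.mem_cylinder_iff, finsupp_vadd_eq, Pi.add_apply, Pi.zero_apply]
    at hx hx' hγx hγx'
  have hγ : γ = 0 := by
    refine h γ γ' x x' (fun k hk => ?_) (fun k hk => ?_) (by rw [hn, hn']; ring)
    · simpa [hx k (hk.trans_le K.le_succ), hk.ne] using hγx k (hk.trans_le K.le_succ)
    · simpa [hx' k hk] using hγx' k hk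
  exact hu (by simpa [hγ, hx K K.lt_succ_self] using (hγx K K.lt_succ_self).symm)

instance [P.IsAddLeftInvariant] : VAddInvariantMeasure (ℕ →₀ A) (ℕ → A) P :=
  ⟨fun γ E _ => measure_preimage_add P (⇑γ) E⟩

theorem RealizesRatio.pairTransitive [Finite A] [DiscreteTopology A] [IsFiniteMeasure P]
    [P.IsAddLeftInvariant] {p q : ℤ} (h : RealizesRatio c p q) :
    (digitCocycle c).PairTransitive P p q := by
  intro W W' hW hW' hW0 hW0' n n'
  have : (P.prod P).IsAddLeftInvariant := Measure.prod.instIsAddLeftInvariant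
  let φ := (Finsupp.coeFnAddHom (ι := ℕ) (M := A)).prodMap (Finsupp.coeFnAddHom (ι := ℕ) (M := A))
  have hφ : DenseRange φ := denseRange_finsupp_coe.prodMap denseRange_finsupp_coe
  obtain ⟨⟨δ, δ'⟩, hδ⟩ := exists_measure_inter_preimage_add_ne_zero hφ hW' hW0 hW0'
  let f (w : (ℕ → A) × (ℕ → A)) : ℤ × ℤ := (digitCocycle c δ w.1, digitCocycle c δ' w.2)
  have hf : Measurable f := ((digitCocycle c).measurable δ).prodMap ((digitCocycle c).measurable δ')
  obtain ⟨⟨e, e'⟩, hV0⟩ := exists_measure_inter_preimage_singleton_ne_zero f hδ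
  have hV : MeasurableSet ({w ∈ W | φ (δ, δ') + w ∈ W'} ∩ f ⁻¹' {(e, e')}) :=
    (hW.inter (hW'.preimage (measurable_const_add _))).inter (hf (measurableSet_singleton _))
  obtain ⟨k, ⟨a, ha, i, j, i', j', hij, hij'⟩, hk⟩ :=
    ((h (n - e) (n' - e')).and_eventually
      (eventually_measure_coord_eq_and_add_single_mem_ne_zero hV hV0)).exists
  refine ⟨a, ha, δ + Finsupp.single k (j - i), δ' + Finsupp.single k (j' - i'), fun h0 => ?_⟩
  refine hk i i' (j - i) (j' - i') (measure_mono_null ?_ h0)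
  rintro ⟨x, x'⟩ ⟨⟨⟨hw, -⟩, -⟩, rfl, rfl, ⟨⟨-, hw'⟩, he⟩⟩
  have he₁ : digitCocycle c δ (x + Pi.single k (j - x k)) = e := congrArg Prod.fst he
  have he₂ : digitCocycle c δ' (x' + Pi.single k (j' - x' k)) = e' := congrArg Prod.snd he
  refine ⟨hw, ?_, ?_, ?_⟩
  · simp only [add_vadd, finsupp_single_vadd]
    exact hw'
  · rw [HeightCocycle.map_add, finsupp_single_vadd, digitCocycle_single, sub_add_cancel, hij, he₁]
    ring
  · rw [HeightCocycle.map_add, finsupp_single_vadd, digitCocycle_single, sub_add_cancel, hij', he₂]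
    ring

end DigitCocycle

/-! ### Lacunary digits -/

section Lacunary

variable {A : Type*}

/-- The differences of the digits of index `k` lie between `4 * (M k + 1)` and `M (k + 1) - M k`, so
that each of them dominates all displacements by digit changes of smaller index. -/
structure IsLacunary (c : ℕ → A → ℤ) (M : ℕ → ℕ) : Prop where
  abs_sub_add_le : ∀ k i j, |c k i - c k j| + M k ≤ M (k + 1)
  le_abs_sub : ∀ k i j, i ≠ j → 4 * ((M k : ℤ) + 1) ≤ |c k i - c k j|

namespace IsLacunary

variable {c : ℕ → A → ℤ} {M : ℕ → ℕ}

theorem lt_mul_succ [Nontrivial A] (hc : IsLacunary c M) (k : ℕ) : 5 * M k < M (k + 1) := by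
  obtain ⟨i, j, hij⟩ := exists_pair_ne A
  have := hc.abs_sub_add_le k i j
  have := hc.le_abs_sub k i j hij
  lia

theorem monotone [Nontrivial A] (hc : IsLacunary c M) : Monotone M :=
  monotone_nat_of_le_succ fun k => by
    have := hc.lt_mul_succ k
    lia

variable [AddCommGroup A] [MeasurableSpace A] [MeasurableSingletonClass A] [Countable A]

theorem abs_digitCocycle_sub_le (hc : IsLacunary c M) {γ : ℕ →₀ A} {k : ℕ}
    (hγ : ∀ l ∈ γ.support, l ≤ k) (x : ℕ → A) :
    |digitCocycle c γ x - (c k (γ k + x k) - c k (x k))| ≤ M k := by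
  have hsupp : γ.support ⊆ Finset.range (k + 1) := fun l hl =>
    Finset.mem_range.2 (Nat.lt_succ_of_le (hγ l hl))
  rw [digitCocycle_eq_sum hsupp, Finset.sum_range_succ, add_sub_cancel_right]
  clear hγ hsupp
  induction k with
  | zero => simp
  | succ k ih =>
    rw [Finset.sum_range_succ]
    have := abs_add_le (∑ l ∈ Finset.range k, (c l (γ l + x l) - c l (x l)))
      (c k (γ k + x k) - c k (x k))
    linarith [hc.abs_sub_add_le k (γ k + x k) (x k)]

theorem exists_le_abs_digitCocycle_le (hc : IsLacunary c M) {γ : ℕ →₀ A} (hγ : γ ≠ 0)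
    (x : ℕ → A) : ∃ k, 3 * (M k : ℤ) + 4 ≤ |digitCocycle c γ x| ∧
      |digitCocycle c γ x| ≤ M (k + 1) := by
  obtain ⟨k, hk, hmax⟩ :=
    γ.support.exists_max_image id (Finsupp.support_nonempty_iff.2 hγ)
  have hne : γ k + x k ≠ x k := by simpa using hk
  have hsplit : |digitCocycle c γ x - (c k (γ k + x k) - c k (x k))| ≤ M k :=
    hc.abs_digitCocycle_sub_le hmax x
  have hlow := abs_sub_abs_le_abs_sub (c k (γ k + x k) - c k (x k)) (digitCocycle c γ x)
  have hupp := abs_sub_abs_le_abs_sub (digitCocycle c γ x) (c k (γ k + x k) - c k (x k))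
  rw [abs_sub_comm _ (digitCocycle c γ x)] at hlow
  exact ⟨k, by linarith [hc.le_abs_sub k _ _ hne],
    by linarith [hc.abs_sub_add_le k (γ k + x k) (x k)]⟩

theorem isFree (hc : IsLacunary c M) : (digitCocycle c).IsFree := by
  intro γ x h
  by_contra hγ
  obtain ⟨k, hk, -⟩ := hc.exists_le_abs_digitCocycle_le hγ x
  rw [h, abs_zero] at hk
  lia

theorem abs_digitCocycle_ne [Nontrivial A] (hc : IsLacunary c M) {i j : ℕ} (hij : i < j)
    (γ : ℕ →₀ A) (x : ℕ → A) : |digitCocycle c γ x| ≠ 2 * M j - 2 * M i := by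
  intro h
  have hlt := (hc.lt_mul_succ i).trans_le (hc.monotone hij)
  rcases eq_or_ne γ 0 with rfl | hγ
  · rw [HeightCocycle.map_zero, abs_zero] at h
    lia
  obtain ⟨k, hlow, hupp⟩ := hc.exists_le_abs_digitCocycle_le hγ x
  rcases lt_or_ge k j with hk | hk
  · have := hc.monotone (Nat.succ_le_of_lt hk)
    lia
  · have := hc.monotone hk
    lia

theorem digitCocycle_ne_sub [Nontrivial A] (hc : IsLacunary c M) (i j : ℕ) (hij : i ≠ j)
    (γ : ℕ →₀ A) (x : ℕ → A) : digitCocycle c γ x ≠ 2 * M i - 2 * M j := by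
  intro h
  rcases hij.lt_or_gt with hij | hij
  · refine hc.abs_digitCocycle_ne hij γ x ?_
    rw [h, abs_sub_comm, abs_of_nonneg]
    have := hc.monotone hij.le
    lia
  · refine hc.abs_digitCocycle_ne hij γ x ?_
    rw [h, abs_of_nonneg]
    have := hc.monotone hij.le
    lia

theorem isSeparated (hc : IsLacunary c M) {p q K : ℕ}
    (h : ∀ k ≥ K, ∀ i j i' j', (i ≠ j ∨ i' ≠ j') →
      ((q + p : ℕ) : ℤ) * M k < |q * (c k i - c k j) - p * (c k i' - c k j')|) :
    IsSeparated c p q K := by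
  intro γ γ' x x' hγ hγ' heq
  by_contra h0
  have hne : (γ.support ∪ γ'.support).Nonempty :=
    (Finsupp.support_nonempty_iff.2 h0).mono Finset.subset_union_left
  obtain ⟨k, hk, hmax⟩ := (γ.support ∪ γ'.support).exists_max_image id hne
  have hk0 : γ k ≠ 0 ∨ γ' k ≠ 0 := by simpa using hk
  have hKk : K ≤ k := by
    by_contra! hlt
    exact hk0.elim (· (hγ k hlt)) (· (hγ' k hlt))
  let e := c k (γ k + x k) - c k (x k)
  let e' := c k (γ' k + x' k) - c k (x' k)
  have hsplit : |digitCocycle c γ x - e| ≤ M k :=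
    hc.abs_digitCocycle_sub_le (fun l hl => hmax l (Finset.mem_union_left _ hl)) x
  have hsplit' : |digitCocycle c γ' x' - e'| ≤ M k :=
    hc.abs_digitCocycle_sub_le (fun l hl => hmax l (Finset.mem_union_right _ hl)) x'
  refine (h k hKk (γ k + x k) (x k) (γ' k + x' k) (x' k) (by simpa using hk0)).not_ge ?_
  calc |q * e - p * e'|
      = |p * (digitCocycle c γ' x' - e') - q * (digitCocycle c γ x - e)| := by
        congr 1
        linear_combination heq
    _ ≤ p * |digitCocycle c γ' x' - e'| + q * |digitCocycle c γ x - e| :=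
        (abs_sub _ _).trans_eq (by simp only [abs_mul, Nat.abs_cast])
    _ ≤ p * M k + q * M k := by gcongr
    _ = ((q + p : ℕ) : ℤ) * M k := by push_cast; ring

end IsLacunary

end Lacunary

/-! ### Choice of the digits -/

section DigitChoice

open Filter

theorem exists_seq_forall_frequently_eq (α : Type*) [Countable α] [Nonempty α] :
    ∃ v : ℕ → α, ∀ a, ∃ᶠ k in atTop, v k = a := by
  obtain ⟨e, he⟩ := exists_surjective_nat α
  refine ⟨fun k => e k.unpair.1, fun a => frequently_atTop.2 fun N => ?_⟩
  obtain ⟨n, rfl⟩ := he a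
  exact ⟨Nat.pair n N, Nat.right_le_pair n N, by simp⟩

theorem le_abs_scale_mul_add (M : ℕ) {N ρ : ℕ} {β r : ℤ} (hβ : β ≠ 0) (hr : |r| ≤ 2 * N * ρ) :
    4 * N * ((M : ℤ) + 1) ≤ |((4 * N * (M + 1 + ρ) : ℕ) : ℤ) * β + r| := by
  set b := ((4 * N * (M + 1 + ρ) : ℕ) : ℤ) with hb
  have hbβ : b ≤ |b * β| := by
    rw [abs_mul, abs_of_nonneg (Int.natCast_nonneg _)]
    exact le_mul_of_one_le_right (Int.natCast_nonneg _) (Int.one_le_abs hβ)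
  have hρ : (0 : ℤ) ≤ 2 * N * ρ := by positivity
  push_cast at hb
  linarith [abs_sub_abs_le_abs_add (b * β) r]

theorem abs_mul_add_mul_le {f g x y N ρ : ℤ} (hf : |f| ≤ N) (hg : |g| ≤ N) (hx : |x| ≤ ρ)
    (hy : |y| ≤ ρ) : |f * x + g * y| ≤ 2 * N * ρ := by
  have hN : 0 ≤ N := (abs_nonneg f).trans hf
  calc |f * x + g * y| ≤ |f| * |x| + |g| * |y| := by
        simpa only [abs_mul] using abs_add_le (f * x) (g * y)
    _ ≤ N * ρ + N * ρ := by gcongr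
    _ = 2 * N * ρ := by ring

theorem eq_zero_of_mul_eq_mul_of_mem_pair {p q r s m m' : ℕ} (hp : 0 < p) (hpq : p < q)
    (hr : 0 < r) (hrs : r ≤ s) (hne : p * s ≠ q * r) (hm : m = 0 ∨ m = r ∨ m = s)
    (hm' : m' = 0 ∨ m' = r ∨ m' = s) (h : q * m = p * m') : m = 0 ∧ m' = 0 := by
  have hlt (n : ℕ) (hn : 0 < n) : p * n < q * n := Nat.mul_lt_mul_of_pos_right hpq hn
  have hs : 0 < s := hr.trans_le hrs
  have hprs : p * r ≤ p * s := Nat.mul_le_mul_left p hrs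
  have hpr : 0 < p * r := Nat.mul_pos hp hr
  have hltr := hlt r hr
  have hlts := hlt s hs
  rcases hm with rfl | rfl | rfl <;> rcases hm' with rfl | rfl | rfl <;> lia

/-- The parameters of one stage of the construction: a ratio `p / q` in `R`, to be realized with
remainders `s` and `t`. The ratio `1` is allowed as well, so that there are stages when `R` is
empty. -/
structure RatioStage (R : Set ℚ) where
  (p q : ℕ)
  (s t : ℤ)
  p_pos : 0 < p
  p_le_q : p ≤ q
  ratio_mem : (p / q : ℚ) ∈ insert 1 R

namespace RatioStage

variable {R : Set ℚ}

instance : Nonempty (RatioStage R) := ⟨⟨1, 1, 0, 0, one_pos, le_rfl, by simp⟩⟩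

instance : Countable (RatioStage R) :=
  Function.Injective.countable (f := fun v : RatioStage R => (v.p, v.q, v.s, v.t))
    fun v w h => by
      cases v
      cases w
      simpa using h

/-- The coefficient of the coarse scale in a digit. -/
def high : ZMod 4 → ℤ := ![0, 0, 1, 1]

variable (v : RatioStage R)

/-- The coefficient of the fine scale in a digit. -/
def mid : ZMod 4 → ℤ := ![0, v.p, 0, v.q]

/-- The perturbation term of a digit. -/
def low : ZMod 4 → ℤ := ![0, v.s, 0, v.t]

/-- A bound for the differences of perturbation terms. -/
def weight : ℕ := v.s.natAbs + v.t.natAbs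

/-- The scale that dominates `N`-fold perturbations and displacements up to `M`. -/
def fineScale (N M : ℕ) : ℕ := 4 * N * (M + 1 + v.weight)

/-- The scale that dominates `N`-fold displacements at the fine scale as well. -/
def coarseScale (N M : ℕ) : ℕ := 4 * N * (M + 1 + (v.fineScale N M * v.q + v.weight))

/-- The four digits `0`, `a * p + s`, `b` and `b + a * q + t`, where `a` is the fine and `b` the
coarse scale. -/
def digit (N M : ℕ) (i : ZMod 4) : ℤ :=
  v.coarseScale N M * high i + (v.fineScale N M * v.mid i + v.low i)

theorem mul_q_ne_mul_p {p q : ℕ} (hpq : p < q) (h : (p / q : ℚ) ∉ R) : p * v.q ≠ q * v.p := by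
  intro heq
  have hq : (q : ℚ) ≠ 0 := by exact_mod_cast (p.zero_le.trans_lt hpq).ne'
  have hvq : (v.q : ℚ) ≠ 0 := by exact_mod_cast (v.p_pos.trans_le v.p_le_q).ne'
  have hratio : (p / q : ℚ) = v.p / v.q := by
    rw [div_eq_div_iff hq hvq, mul_comm _ (q : ℚ)]
    exact_mod_cast heq
  rcases hratio ▸ v.ratio_mem with h1 | h1
  · rw [div_eq_one_iff_eq hq] at h1
    exact hpq.ne (by exact_mod_cast h1)
  · exact h h1

theorem abs_high_sub_le (i j : ZMod 4) : |high i - high j| ≤ 1 := by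
  fin_cases i <;> fin_cases j <;> simp [high]

theorem abs_mid_sub_le (i j : ZMod 4) : |v.mid i - v.mid j| ≤ v.q := by
  have := v.p_le_q
  fin_cases i <;> fin_cases j <;> simp [mid, abs_le] <;> lia

theorem abs_low_sub_le (i j : ZMod 4) : |v.low i - v.low j| ≤ v.weight := by
  have hs := abs_le.1 (le_refl |v.s|)
  have ht := abs_le.1 (le_refl |v.t|)
  fin_cases i <;> fin_cases j <;> simp [low, weight, abs_le] <;> lia

theorem natAbs_mid_sub_of_high_eq {i j : ZMod 4} (h : high i = high j) :
    (v.mid i - v.mid j).natAbs = 0 ∨ (v.mid i - v.mid j).natAbs = v.p ∨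
      (v.mid i - v.mid j).natAbs = v.q := by
  fin_cases i <;> fin_cases j <;> simp [mid, high] at h ⊢

theorem high_ne_or_mid_ne {i j : ZMod 4} (hij : i ≠ j) : high i ≠ high j ∨ v.mid i ≠ v.mid j := by
  have := v.p_pos.ne'
  have := (v.p_pos.trans_le v.p_le_q).ne'
  fin_cases i <;> fin_cases j <;> first | exact absurd rfl hij | simp_all [mid, high, eq_comm]

theorem high_comb_ne_zero_or_mid_comb_ne_zero {p q : ℕ} (hp : 0 < p) (hpq : p < q)
    (h : p * v.q ≠ q * v.p) {i j i' j' : ZMod 4} (hij : i ≠ j ∨ i' ≠ j') :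
    q * (high i - high j) + -p * (high i' - high j') ≠ 0 ∨
      q * (v.mid i - v.mid j) + -p * (v.mid i' - v.mid j') ≠ 0 := by
  simp only [neg_mul, ← sub_eq_add_neg, ne_eq, ← not_and_or, sub_eq_zero]
  rintro ⟨hhigh, hmid⟩
  have hdvd : (q : ℤ) ∣ p * (high i' - high j') := ⟨_, hhigh.symm⟩
  have hlt : |(p : ℤ) * (high i' - high j')| < q := by
    rw [abs_mul, Nat.abs_cast]
    have := mul_le_of_le_one_right (Int.natCast_nonneg p) (abs_high_sub_le i' j')
    lia
  have hh' : high i' = high j' := by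
    simpa [hp.ne', sub_eq_zero] using Int.eq_zero_of_abs_lt_dvd hdvd hlt
  have hh : high i = high j := by simpa [hh', (hp.trans hpq).ne', sub_eq_zero] using hhigh
  obtain ⟨hm, hm'⟩ := eq_zero_of_mul_eq_mul_of_mem_pair hp hpq v.p_pos v.p_le_q h
    (v.natAbs_mid_sub_of_high_eq hh) (v.natAbs_mid_sub_of_high_eq hh')
    (by simpa only [Int.natAbs_mul, Int.natAbs_natCast] using congrArg Int.natAbs hmid)
  rw [Int.natAbs_eq_zero, sub_eq_zero] at hm hm'
  rcases hij with hij | hij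
  · exact (v.high_ne_or_mid_ne hij).elim (· hh) (· hm)
  · exact (v.high_ne_or_mid_ne hij).elim (· hh') (· hm')

theorem le_abs_digit_comb {N : ℕ} (M : ℕ) {f g : ℤ} (hf : |f| ≤ N) (hg : |g| ≤ N)
    {i j i' j' : ZMod 4}
    (h : f * (high i - high j) + g * (high i' - high j') ≠ 0 ∨
      f * (v.mid i - v.mid j) + g * (v.mid i' - v.mid j') ≠ 0) :
    4 * N * ((M : ℤ) + 1) ≤
      |f * (v.digit N M i - v.digit N M j) + g * (v.digit N M i' - v.digit N M j')| := by
  set β := f * (high i - high j) + g * (high i' - high j')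
  set u := f * (v.mid i - v.mid j) + g * (v.mid i' - v.mid j')
  set w := f * (v.low i - v.low j) + g * (v.low i' - v.low j')
  have key : f * (v.digit N M i - v.digit N M j) + g * (v.digit N M i' - v.digit N M j') =
      v.coarseScale N M * β + (v.fineScale N M * u + w) := by
    simp only [digit]
    ring
  have hw : |w| ≤ 2 * N * v.weight :=
    abs_mul_add_mul_le hf hg (v.abs_low_sub_le i j) (v.abs_low_sub_le i' j')
  have hu : |u| ≤ 2 * N * v.q :=
    abs_mul_add_mul_le hf hg (v.abs_mid_sub_le i j) (v.abs_mid_sub_le i' j')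
  rw [key]
  by_cases hβ : β = 0
  · rw [hβ, mul_zero, zero_add]
    exact le_abs_scale_mul_add M (h.resolve_left (not_not_intro hβ)) hw
  · refine le_abs_scale_mul_add M hβ ?_
    calc |v.fineScale N M * u + w| ≤ v.fineScale N M * |u| + |w| := by
          simpa only [abs_mul, Nat.abs_cast] using abs_add_le (v.fineScale N M * u) w
      _ ≤ v.fineScale N M * (2 * N * v.q) + 2 * N * v.weight := by gcongr
      _ = 2 * N * (v.fineScale N M * v.q + v.weight : ℕ) := by push_cast; ring

theorem abs_digit_sub_le (N M : ℕ) (i j : ZMod 4) :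
    |v.digit N M i - v.digit N M j| ≤ v.coarseScale N M + (v.fineScale N M * v.q + v.weight) := by
  have key : v.digit N M i - v.digit N M j = v.coarseScale N M * (high i - high j) +
      (v.fineScale N M * (v.mid i - v.mid j) + (v.low i - v.low j)) := by
    simp only [digit]
    ring
  rw [key]
  refine (abs_add_le _ _).trans (add_le_add ?_ ((abs_add_le _ _).trans (add_le_add ?_ ?_)))
  · rw [abs_mul, Nat.abs_cast]
    exact mul_le_of_le_one_right (Int.natCast_nonneg _) (abs_high_sub_le i j)
  · rw [abs_mul, Nat.abs_cast]
    exact mul_le_mul_of_nonneg_left (v.abs_mid_sub_le i j) (Int.natCast_nonneg _)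
  · exact v.abs_low_sub_le i j

/-- A bound for the displacements by changes of the digits of index less than `k`. -/
def reach (v : ℕ → RatioStage R) : ℕ → ℕ
  | 0 => 0
  | k + 1 => (v k).coarseScale (k + 1) (reach v k) +
      ((v k).fineScale (k + 1) (reach v k) * (v k).q + (v k).weight) + reach v k

/-- The digits of the construction with stages `v`. The bound `k + 1` on the multipliers makes the
digits of index `k ≥ q` dominate in all combinations with coefficients `p, q`. -/
def digits (v : ℕ → RatioStage R) (k : ℕ) : ZMod 4 → ℤ := (v k).digit (k + 1) (reach v k)

theorem isLacunary_digits (v : ℕ → RatioStage R) : IsLacunary (digits v) (reach v) where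
  abs_sub_add_le k i j := by
    have := (v k).abs_digit_sub_le (k + 1) (reach v k) i j
    simpa only [reach, digits, Nat.cast_add, Nat.cast_mul, add_le_add_iff_right] using this
  le_abs_sub k i j hij := by
    have := (v k).le_abs_digit_comb (N := k + 1) (reach v k) (f := 1) (g := 0) (i := i) (j := j)
      (i' := 0) (j' := 0) (by simp) (by rw [abs_zero]; positivity)
      (by simpa [sub_eq_zero] using (v k).high_ne_or_mid_ne hij)
    simp only [one_mul, zero_mul, add_zero] at this
    refine le_trans ?_ this
    push_cast
    nlinarith

theorem isSeparated_digits (v : ℕ → RatioStage R) {p q : ℕ} (hp : 0 < p) (hpq : p < q)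
    (h : (p / q : ℚ) ∉ R) : IsSeparated (digits v) p q q := by
  refine (isLacunary_digits v).isSeparated fun k hk i j i' j' hij => ?_
  have := (v k).le_abs_digit_comb (reach v k) (f := q) (g := -p) (N := k + 1)
    (by simp; lia) (by simp; lia)
    ((v k).high_comb_ne_zero_or_mid_comb_ne_zero hp hpq
      ((v k).mul_q_ne_mul_p hpq h) hij)
  rw [neg_mul, ← sub_eq_add_neg] at this
  refine lt_of_lt_of_le ?_ this
  have hpqk : ((q + p : ℕ) : ℤ) ≤ 2 * (k + 1) := by lia
  push_cast at hpqk ⊢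
  nlinarith

theorem realizesRatio_digits {v : ℕ → RatioStage R} (hv : ∀ a, ∃ᶠ k in atTop, v k = a) {p q : ℕ}
    (hp : 0 < p) (hpq : p ≤ q) (h : (p / q : ℚ) ∈ R) : RealizesRatio (digits v) p q := by
  intro n n'
  refine (hv ⟨p, q, n, n', hp, hpq, .inr h⟩).mono fun k hk => ?_
  refine ⟨(v k).fineScale (k + 1) (reach v k), by simp [fineScale], 0, 1, 2, 3, ?_, ?_⟩
  · simp [digits, digit, high, mid, low, hk]
  · simp [digits, digit, high, mid, low, hk]

end RatioStage

end DigitChoice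

theorem stmt7 (R : Set ℚ) (hR : R ⊆ {r : ℚ | 0 < r ∧ r < 1}) :
    ∃ (X : Type) (_ : MeasurableSpace X) (_ : StandardBorelSpace X)
      (μ : Measure X) (_ : NoAtoms μ) (_ : SigmaFinite μ) (T : X ≃ᵐ X),
      μ Set.univ = ⊤ ∧ MeasurePreserving T μ μ ∧
      ∀ p q : ℕ, 0 < p → p < q →
        (((p : ℚ) / (q : ℚ) ∈ R →
            IsConservativeMap (μ.prod μ)
              (fun z : X × X => ((⇑T)^[p] z.1, (⇑T)^[q] z.2)) ∧
            IsErgodicMap (μ.prod μ)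
              (fun z : X × X => ((⇑T)^[p] z.1, (⇑T)^[q] z.2)) ∧
            IsConservativeMap (μ.prod μ)
              (fun z : X × X => ((⇑T.symm)^[p] z.1, (⇑T)^[q] z.2)) ∧
            IsErgodicMap (μ.prod μ)
              (fun z : X × X => ((⇑T.symm)^[p] z.1, (⇑T)^[q] z.2))) ∧
         ((p : ℚ) / (q : ℚ) ∉ R →
            ¬ IsErgodicMap (μ.prod μ)
              (fun z : X × X => ((⇑T)^[p] z.1, (⇑T)^[q] z.2)))) := by
  obtain ⟨v, hv⟩ := exists_seq_forall_frequently_eq (RatioStage R)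
  let d := digitCocycle (RatioStage.digits v)
  have hc := RatioStage.isLacunary_digits v
  have hd : d.IsFree := hc.isFree
  let P : Measure (ℕ → ZMod 4) := Measure.addHaarMeasure ⊤
  have : IsProbabilityMeasure P := ⟨Measure.addHaarMeasure_self⟩
  have : Nontrivial (ZMod 4) := ZMod.nontrivial_iff.2 (by norm_num)
  have := neBot_nhdsNE_zero_pi (ι := ℕ) (A := ZMod 4)
  refine ⟨d.OrbitSpace, inferInstance, d.standardBorelSpace_orbitSpace hd, d.orbitMeasure P,
    d.nullSingletonClass_orbitMeasure hd, d.sigmaFinite_orbitMeasure hd, d.shift 1,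
    d.orbitMeasure_univ_eq_top hd hc.digitCocycle_ne_sub, d.measurePreserving_shift hd 1,
    fun p q hp hpq => ⟨fun h => ?_, fun h => ?_⟩⟩
  · have hratio := RatioStage.realizesRatio_digits hv hp hpq.le h
    have hpos := hratio.pairTransitive.isConservativeMap_and_isErgodicMap (P := P) hd
    have hneg := hratio.neg_left.pairTransitive.isConservativeMap_and_isErgodicMap (P := P) hd
    rw [← d.prodMap_shift_one_iterate] at hpos
    rw [← d.prodMap_shift_one_symm_iterate] at hneg
    exact ⟨hpos.1, hpos.2, hneg⟩
  · have hsep := (RatioStage.isSeparated_digits v hp hpq h).not_isErgodicMap (P := P) hd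
    rwa [← d.prodMap_shift_one_iterate] at hsep
end
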